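/- arXiv:1009.4379 — 10 statements merged into one kernel-verified Lean document; each statement's English description precedes it below -/
import Mathlib

section
/- Let Γ be a group. If Γ has a projective unitary representation on some complex Hilbert space which is both irreducible and projectively faithful, then there exists a group Δ admitting a faithful irreducible unitary representation on a complex Hilbert space such that Δ/Z(Δ) is isomorphic to Γ. -/
/-- A projective unitary representation: a map into the unitary operators sending `1` to `id`
whose composition with the quotient by the circle is a homomorphism. -/
def IsProjUnitaryRep {G : Type*} [Group G] {H : Type*} [NormedAddCommGroup H]
    [InnerProductSpace ℂ H] [CompleteSpace H] (π : G → (H →L[ℂ] H)) : Prop :=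
  (∀ x, π x ∈ unitary (H →L[ℂ] H)) ∧ π 1 = 1 ∧
    ∀ x y, ∃ z : Circle, π x * π y = (z : ℂ) • π (x * y)

/-- The projective kernel of a projective representation. -/
def ProjKer {G : Type*} [Group G] {H : Type*} [NormedAddCommGroup H]
    [InnerProductSpace ℂ H] [CompleteSpace H] (π : G → (H →L[ℂ] H)) : Set G :=
  {x | ∃ z : Circle, π x = (z : ℂ) • (1 : H →L[ℂ] H)}

/-- Projective faithfulness. -/
def PFaithful {G : Type*} [Group G] {H : Type*} [NormedAddCommGroup H]
    [InnerProductSpace ℂ H] [CompleteSpace H] (π : G → (H →L[ℂ] H)) : Prop :=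
  ∀ x, x ∈ ProjKer π → x = 1

/-- Irreducibility: the only closed invariant subspaces are `⊥` and `⊤`. -/
def IsIrreducibleRep {G : Type*} {H : Type*} [NormedAddCommGroup H]
    [InnerProductSpace ℂ H] [CompleteSpace H] (π : G → (H →L[ℂ] H)) : Prop :=
  ∀ K : Submodule ℂ H, IsClosed (K : Set H) → (∀ x, ∀ v ∈ K, π x v ∈ K) → K = ⊥ ∨ K = ⊤

/-- An (ordinary) unitary representation. -/
def IsUnitaryRep {G : Type*} [Group G] {H : Type*} [NormedAddCommGroup H]
    [InnerProductSpace ℂ H] [CompleteSpace H] (π : G → (H →L[ℂ] H)) : Prop :=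
  (∀ x, π x ∈ unitary (H →L[ℂ] H)) ∧ π 1 = 1 ∧ ∀ x y, π (x * y) = π x * π y

/-- A multiplier (2-cocycle) with values in the circle group. -/
def IsMultiplier {G : Type*} [Group G] (ζ : G → G → Circle) : Prop :=
  (∀ x, ζ 1 x = 1) ∧ (∀ x, ζ x 1 = 1) ∧
    ∀ x y z, ζ x y * ζ (x * y) z = ζ x (y * z) * ζ y z

/-- A normalised multiplier. -/
def IsNormalised {G : Type*} [Group G] (ζ : G → G → Circle) : Prop :=
  ∀ x : G, ζ x x⁻¹ = 1

/-- A ζ-representation of `G`. -/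
def IsZetaRep {G : Type*} [Group G] {H : Type*} [NormedAddCommGroup H]
    [InnerProductSpace ℂ H] [CompleteSpace H] (ζ : G → G → Circle)
    (π : G → (H →L[ℂ] H)) : Prop :=
  (∀ x, π x ∈ unitary (H →L[ℂ] H)) ∧ π 1 = 1 ∧
    ∀ x y, π x * π y = ((ζ x y : ℂ)) • π (x * y)

/-- A ζ-representation of a subgroup `N` of `G` (with respect to the restriction of ζ). -/
def IsZetaRepOn {G : Type*} [Group G] {H : Type*} [NormedAddCommGroup H]
    [InnerProductSpace ℂ H] [CompleteSpace H] (ζ : G → G → Circle) (N : Subgroup G)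
    (σ : N → (H →L[ℂ] H)) : Prop :=
  (∀ x, σ x ∈ unitary (H →L[ℂ] H)) ∧ σ 1 = 1 ∧
    ∀ x y : N, σ x * σ y = ((ζ (x : G) (y : G) : ℂ)) • σ (x * y)

open scoped Classical in
/-- The conjugate `σ^γ` of a projective representation `σ` of a (normal) subgroup `N`:
`σ^γ(x) = ζ(γ,x)·ζ(γx,γ⁻¹)·σ(γxγ⁻¹)`. -/
noncomputable def conjRep {G : Type*} [Group G] {H : Type*} [NormedAddCommGroup H]
    [InnerProductSpace ℂ H] [CompleteSpace H] (ζ : G → G → Circle) (N : Subgroup G)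
    (σ : N → (H →L[ℂ] H)) (γ : G) (x : N) : H →L[ℂ] H :=
  if h : γ * (x : G) * γ⁻¹ ∈ N then
    ((ζ γ (x : G) : ℂ) * (ζ (γ * (x : G)) γ⁻¹ : ℂ)) • σ ⟨γ * (x : G) * γ⁻¹, h⟩
  else 1

/-- `σ` is Γ-P-faithful: the projective Γ-kernel
`{x ∈ N : ∃ z ∈ T, σ^γ(x) = z·id for all γ}` is trivial. -/
def GammaPFaithful {G : Type*} [Group G] {H : Type*} [NormedAddCommGroup H]
    [InnerProductSpace ℂ H] [CompleteSpace H] (ζ : G → G → Circle) (N : Subgroup G)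
    (σ : N → (H →L[ℂ] H)) : Prop :=
  ∀ x : N, (∃ z : Circle, ∀ γ : G, conjRep ζ N σ γ x = (z : ℂ) • (1 : H →L[ℂ] H)) → x = 1

/-- A finite foot of `G`: a finite minimal (nontrivial) normal subgroup. -/
def IsFiniteFoot {G : Type*} [Group G] (N : Subgroup G) : Prop :=
  N.Normal ∧ N ≠ ⊥ ∧ (∀ M : Subgroup G, M.Normal → M ≠ ⊥ → M ≤ N → M = N) ∧ Finite N

/-- The minisocle: the subgroup generated by all finite feet. -/
def minisocle (G : Type*) [Group G] : Subgroup G :=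
  ⨆ (N : Subgroup G) (_ : IsFiniteFoot N), N

/-- Property (Fab): the normal subgroup generated by any single conjugacy class has finite
abelianisation. -/
def PropertyFab (G : Type*) [Group G] : Prop :=
  ∀ g : G, Finite (Abelianization (Subgroup.normalClosure ({g} : Set G)))

/-- Schur's lemma for unitary operators: a unitary operator commuting with an irreducible
family of operators is a scalar of modulus one. -/
theorem IsIrreducibleRep.exists_circle_smul_of_commute {G : Type*} {H : Type*}
    [NormedAddCommGroup H] [InnerProductSpace ℂ H] [CompleteSpace H] {π : G → (H →L[ℂ] H)}
    (hirr : IsIrreducibleRep π) {u : H →L[ℂ] H} (hu : u ∈ unitary (H →L[ℂ] H))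
    (hcomm : ∀ x, Commute u (π x)) :
    ∃ z : Circle, u = (z : ℂ) • (1 : H →L[ℂ] H) := by
  rcases subsingleton_or_nontrivial H with hH | hH
  · exact ⟨1, Subsingleton.elim _ _⟩
  have hn : IsStarNormal u := ⟨by
    rw [Commute, SemiconjBy, (Unitary.mem_iff.mp hu).1, (Unitary.mem_iff.mp hu).2]⟩
  have hstar : ∀ x, Commute (star u) (π x) := fun x => by
    have h : u * π x = π x * u := hcomm x
    calc star u * π x = star u * (π x * u) * star u := by
          rw [mul_assoc, mul_assoc, (Unitary.mem_iff.mp hu).2, mul_one]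
      _ = π x * star u := by
          rw [← h, ← mul_assoc, (Unitary.mem_iff.mp hu).1, one_mul]
  obtain ⟨a, ha⟩ := spectrum.nonempty u
  have hspec : ∀ b ∈ spectrum ℂ u, b = a := by
    intro b hb
    by_contra hab
    set f : ℂ → ℂ := fun x => ((max 0 (dist x b - dist x a) : ℝ) : ℂ) with hf
    set g : ℂ → ℂ := fun x => ((max 0 (dist x a - dist x b) : ℝ) : ℂ) with hg
    have hfc : Continuous f := by fun_prop
    have hgc : Continuous g := by fun_prop
    have hfg : cfc f u * cfc g u = 0 := by
      rw [← cfc_mul f g u hfc.continuousOn hgc.continuousOn]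
      have : (fun x => f x * g x) = fun _ => 0 := by
        funext x
        rcases le_total (dist x a) (dist x b) with h | h
        · simp [hg, max_eq_left (sub_nonpos.mpr h)]
        · simp [hf, max_eq_left (sub_nonpos.mpr h)]
      rw [this, cfc_const_zero]
    have hne : ∀ k : ℂ → ℂ, Continuous k → ∀ c ∈ spectrum ℂ u, k c ≠ 0 → cfc k u ≠ 0 := by
      intro k hk c hc hkc h0
      have hmem : k c ∈ spectrum ℂ (cfc k u) := by
        rw [cfc_map_spectrum k u hn hk.continuousOn]
        exact ⟨c, hc, rfl⟩
      rw [h0, spectrum.zero_eq] at hmem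
      exact hkc hmem
    have hf0 : cfc f u ≠ 0 := hne f hfc a ha (by
      simpa [hf] using Ne.symm hab)
    have hg0 : cfc g u ≠ 0 := hne g hgc b hb (by
      simpa [hg] using hab)
    rcases hirr (LinearMap.ker (cfc f u).toLinearMap) (cfc f u).isClosed_ker (fun x v hv => by
        have hc : cfc f u * π x = π x * cfc f u := (hcomm x).cfc (hstar x) f
        have := congrArg (fun T : H →L[ℂ] H => T v) hc
        have hv' : cfc f u v = 0 := hv
        simpa [hv'] using this) with h | h
    · refine hg0 (ContinuousLinearMap.ext fun v => ?_)
      have hv : cfc g u v ∈ LinearMap.ker (cfc f u).toLinearMap :=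
        congrArg (fun T : H →L[ℂ] H => T v) hfg
      rw [h] at hv
      exact hv
    · refine hf0 (ContinuousLinearMap.ext fun v => ?_)
      have hv : v ∈ LinearMap.ker (cfc f u).toLinearMap := h ▸ Submodule.mem_top
      exact hv
  refine ⟨⟨a, spectrum.subset_circle_of_unitary hu ha⟩, ?_⟩
  calc u = cfc (fun x : ℂ => x) u := (cfc_id' ℂ u).symm
    _ = cfc (fun _ : ℂ => a) u := cfc_congr fun b hb => hspec b hb
    _ = a • (1 : H →L[ℂ] H) := by rw [cfc_const a u, Algebra.algebraMap_eq_smul_one]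

/-- The central extension of `G` by the circle attached to a projective unitary representation
`π`: pairs `(x, u)` of a group element and a unitary operator that is a multiple of `π x`. -/
def IsProjUnitaryRep.extension {G : Type*} [Group G] {H : Type*} [NormedAddCommGroup H]
    [InnerProductSpace ℂ H] [CompleteSpace H] {π : G → (H →L[ℂ] H)} (hπ : IsProjUnitaryRep π) :
    Subgroup (G × unitary (H →L[ℂ] H)) where
  carrier := {p | ∃ z : Circle, (p.2 : H →L[ℂ] H) = (z : ℂ) • π p.1}
  one_mem' := ⟨1, by simp [hπ.2.1]⟩
  mul_mem' := by
    rintro ⟨x, u⟩ ⟨y, v⟩ ⟨z, hz⟩ ⟨w, hw⟩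
    obtain ⟨c, hc⟩ := hπ.2.2 x y
    refine ⟨z * w * c, ?_⟩
    simp only at hz hw
    simp [hz, hw, hc, smul_smul, mul_comm, mul_left_comm]
  inv_mem' := by
    rintro ⟨x, u⟩ ⟨z, hz⟩
    obtain ⟨c, hc⟩ := hπ.2.2 x x⁻¹
    simp only at hz
    rw [mul_inv_cancel, hπ.2.1] at hc
    have h : (u : H →L[ℂ] H) * π x⁻¹ = ((z * c : Circle) : ℂ) • 1 := by
      rw [hz, smul_mul_assoc, hc, smul_smul, Circle.coe_mul]
    have h' : π x⁻¹ = ((z * c : Circle) : ℂ) • star (u : H →L[ℂ] H) := by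
      rw [← one_mul (π x⁻¹), ← Unitary.coe_star_mul_self u, mul_assoc, h, mul_smul_comm, mul_one]
    refine ⟨(z * c)⁻¹, ?_⟩
    change star (u : H →L[ℂ] H) = (((z * c)⁻¹ : Circle) : ℂ) • π x⁻¹
    rw [h', smul_smul, ← Circle.coe_mul, inv_mul_cancel, Circle.coe_one, one_smul]

theorem IsProjUnitaryRep.mk_mem_extension {G : Type*} [Group G] {H : Type*}
    [NormedAddCommGroup H] [InnerProductSpace ℂ H] [CompleteSpace H] {π : G → (H →L[ℂ] H)}
    (hπ : IsProjUnitaryRep π) (x : G) : (x, ⟨π x, hπ.1 x⟩) ∈ hπ.extension :=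
  ⟨1, by simp⟩

/-- An element of the extension acting by a scalar lies over the identity when `π` is
projectively faithful. -/
theorem PFaithful.fst_eq_one_of_mem_extension {G : Type*} [Group G] {H : Type*}
    [NormedAddCommGroup H] [InnerProductSpace ℂ H] [CompleteSpace H] {π : G → (H →L[ℂ] H)}
    (hfaith : PFaithful π) (hπ : IsProjUnitaryRep π) {p : G × unitary (H →L[ℂ] H)}
    (hp : p ∈ hπ.extension) {c : Circle} (hc : (p.2 : H →L[ℂ] H) = (c : ℂ) • 1) :
    p.1 = 1 := by
  obtain ⟨z, hz⟩ := hp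
  refine hfaith _ ⟨z⁻¹ * c, ?_⟩
  rw [Circle.coe_mul, ← smul_smul, ← hc, hz, smul_smul, ← Circle.coe_mul, inv_mul_cancel,
    Circle.coe_one, one_smul]

theorem IsProjUnitaryRep.center_extension {G : Type*} [Group G] {H : Type*}
    [NormedAddCommGroup H] [InnerProductSpace ℂ H] [CompleteSpace H] {π : G → (H →L[ℂ] H)}
    (hπ : IsProjUnitaryRep π) (hirr : IsIrreducibleRep π) (hfaith : PFaithful π) :
    Subgroup.center hπ.extension =
      ((MonoidHom.fst G (unitary (H →L[ℂ] H))).comp hπ.extension.subtype).ker := by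
  ext ⟨⟨x, u⟩, hp⟩
  rw [Subgroup.mem_center_iff, MonoidHom.mem_ker]
  constructor
  · intro h
    obtain ⟨c, hc⟩ := hirr.exists_circle_smul_of_commute u.2 fun y => by
      have := congrArg (fun q : hπ.extension => ((q : G × unitary (H →L[ℂ] H)).2 : H →L[ℂ] H))
        (h ⟨_, hπ.mk_mem_extension y⟩)
      exact this.symm
    exact hfaith.fst_eq_one_of_mem_extension hπ hp hc
  · rintro h ⟨⟨y, v⟩, hq⟩
    obtain rfl : x = 1 := h
    obtain ⟨z, hz⟩ := hp
    refine Subtype.ext (Prod.ext (by simp) (Subtype.ext ?_))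
    change (v : H →L[ℂ] H) * u = u * v
    simp only [hπ.2.1] at hz
    simp [hz]

/-- If Γ has an irreducible, projectively faithful projective unitary representation, then
Γ is the quotient of a group Δ (admitting a faithful irreducible unitary representation)
by its centre. -/
theorem stmt_0 (Γ : Type) [Group Γ]
    (H : Type) [NormedAddCommGroup H] [InnerProductSpace ℂ H] [CompleteSpace H]
    (π : Γ → (H →L[ℂ] H)) (hπ : IsProjUnitaryRep π) (hirr : IsIrreducibleRep π)
    (hfaith : PFaithful π) :
    ∃ (Δ : Type) (_ : Group Δ) (K : Type) (_ : NormedAddCommGroup K)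
      (_ : InnerProductSpace ℂ K) (_ : CompleteSpace K) (φ : Δ → (K →L[ℂ] K)),
      IsUnitaryRep φ ∧ Function.Injective φ ∧ IsIrreducibleRep φ ∧
        Nonempty ((Δ ⧸ Subgroup.center Δ) ≃* Γ) := by
  refine ⟨hπ.extension, inferInstance, H, inferInstance, inferInstance, inferInstance,
    fun p => (p.1.2 : H →L[ℂ] H), ⟨fun p => p.1.2.2, rfl, fun _ _ => rfl⟩, ?_, ?_, ⟨?_⟩⟩
  · intro p q hpq
    have hsnd : p.1.2 = q.1.2 := Subtype.ext hpq
    have hfst : (p * q⁻¹).1.1 = 1 :=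
      hfaith.fst_eq_one_of_mem_extension hπ (p * q⁻¹).2 (c := 1) (by simp [hsnd])
    exact Subtype.ext (Prod.ext (mul_inv_eq_one.mp hfst) hsnd)
  · exact fun K hK hinv => hirr K hK fun x => hinv ⟨_, hπ.mk_mem_extension x⟩
  · exact (QuotientGroup.quotientMulEquivOfEq (hπ.center_extension hirr hfaith)).trans
      (QuotientGroup.quotientKerEquivOfSurjective _ fun x => ⟨⟨_, hπ.mk_mem_extension x⟩, rfl⟩)
end

section
/- Let Γ be a group. If there exists a group Δ admitting a faithful irreducible unitary representation on a complex Hilbert space such that Δ/Z(Δ) is isomorphic to Γ, then Γ has a projective unitary representation on some complex Hilbert space which is both irreducible and projectively faithful. -/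
/-- Schur's lemma for unitary operators: a unitary operator commuting with an irreducible family
of operators is a scalar of modulus one. -/
lemma IsIrreducibleRep.exists_circle_smul_eq_of_commute {G H : Type*}
    [NormedAddCommGroup H] [InnerProductSpace ℂ H] [CompleteSpace H] {φ : G → (H →L[ℂ] H)}
    (hirr : IsIrreducibleRep φ) {U : H →L[ℂ] H}
    (hU : U ∈ unitary (H →L[ℂ] H)) (hcomm : ∀ x, Commute U (φ x)) :
    ∃ z : Circle, U = (z : ℂ) • (1 : H →L[ℂ] H) := by
  rcases subsingleton_or_nontrivial H with hH | hH
  · exact ⟨1, ContinuousLinearMap.ext fun v => Subsingleton.elim _ _⟩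
  have hn : IsStarNormal U := ⟨by
    rw [Unitary.mem_iff] at hU
    exact hU.1.trans hU.2.symm⟩
  have hstar : ∀ x, Commute (star U) (φ x) := fun x => by
    have h1 := hU.1
    have h2 := hU.2
    calc star U * φ x = star U * (φ x * U) * star U := by
          rw [mul_assoc, mul_assoc, h2, mul_one]
      _ = star U * (U * φ x) * star U := by rw [(hcomm x).eq]
      _ = φ x * star U := by rw [← mul_assoc, h1, one_mul]
  have hsub : (spectrum ℂ U).Subsingleton := by
    intro a ha b hb
    by_contra hab
    let f : ℂ → ℂ := fun w => ((max 0 (dist a b / 2 - dist w a) : ℝ) : ℂ)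
    let g : ℂ → ℂ := fun w => ((max 0 (dist a b / 2 - dist w b) : ℝ) : ℂ)
    have hf : Continuous f := by fun_prop
    have hg : Continuous g := by fun_prop
    have hfa : f a ≠ 0 := by simp [f, hab]
    have hgb : g b ≠ 0 := by simp [g, hab]
    have hfg : ∀ w, f w * g w = 0 := fun w => by
      rcases le_total (dist a b / 2) (dist w a) with h | h
      · simp [f, max_eq_left (sub_nonpos.2 h)]
      · have : dist a b / 2 ≤ dist w b := by
          have := dist_triangle_left a b w
          linarith
        simp [g, max_eq_left (sub_nonpos.2 this)]
    have cfc_ne : ∀ {k : ℂ → ℂ} {c : ℂ}, Continuous k → c ∈ spectrum ℂ U → k c ≠ 0 →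
        cfc k U ≠ 0 := fun {k c} hk hc hkc h0 => by
      have := cfc_map_spectrum k U hn hk.continuousOn
      rw [h0, spectrum.zero_eq] at this
      exact hkc (this.ge (Set.mem_image_of_mem k hc))
    have hprod : cfc f U * cfc g U = 0 := by
      rw [← cfc_mul f g U hf.continuousOn hg.continuousOn]
      simp [hfg]
    have hinv : ∀ x, ∀ v ∈ LinearMap.ker (cfc f U : H →L[ℂ] H).toLinearMap,
        φ x v ∈ LinearMap.ker (cfc f U : H →L[ℂ] H).toLinearMap := fun x v hv => by
      have hc : Commute (cfc f U) (φ x) := Commute.cfc (hcomm x) (hstar x) f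
      exact (congrArg (fun T : H →L[ℂ] H => T v) hc.eq).trans
        ((congrArg (φ x) hv).trans (map_zero (φ x)))
    rcases hirr _ (ContinuousLinearMap.isClosed_ker (cfc f U)) hinv with h | h
    · refine cfc_ne hg hb hgb (ContinuousLinearMap.ext fun v => ?_)
      have : cfc g U v ∈ LinearMap.ker (cfc f U : H →L[ℂ] H).toLinearMap :=
        congrArg (fun T : H →L[ℂ] H => T v) hprod
      rw [h] at this
      simpa using this
    · refine cfc_ne hf ha hfa (ContinuousLinearMap.ext fun v => ?_)
      have : v ∈ LinearMap.ker (cfc f U : H →L[ℂ] H).toLinearMap := h ▸ Submodule.mem_top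
      simpa using this
  obtain ⟨a, ha⟩ := spectrum.nonempty U
  have hnorm : a ∈ Metric.sphere (0 : ℂ) 1 := spectrum.subset_circle_of_unitary hU ha
  refine ⟨⟨a, hnorm⟩, ?_⟩
  calc U = cfc (fun w : ℂ => w) U := (cfc_id' ℂ U).symm
    _ = cfc (fun _ : ℂ => a) U := cfc_congr fun w hw => hsub hw ha
    _ = a • (1 : H →L[ℂ] H) := by rw [cfc_const a U, Algebra.algebraMap_eq_smul_one]

/-- If Γ ≅ Δ/Z(Δ) where Δ admits a faithful irreducible unitary representation, then
Γ has an irreducible, projectively faithful projective unitary representation. -/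
theorem stmt_1 (Γ : Type) [Group Γ] (Δ : Type) [Group Δ]
    (K : Type) [NormedAddCommGroup K] [InnerProductSpace ℂ K] [CompleteSpace K]
    (φ : Δ → (K →L[ℂ] K)) (hrep : IsUnitaryRep φ) (hinj : Function.Injective φ)
    (hirr : IsIrreducibleRep φ) (e : (Δ ⧸ Subgroup.center Δ) ≃* Γ) :
    ∃ (H : Type) (_ : NormedAddCommGroup H) (_ : InnerProductSpace ℂ H) (_ : CompleteSpace H)
      (π : Γ → (H →L[ℂ] H)),
      IsProjUnitaryRep π ∧ IsIrreducibleRep π ∧ PFaithful π := by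
  classical
  obtain ⟨s, hs1, hs⟩ : ∃ s : Γ → Δ, s 1 = 1 ∧ ∀ x, e (s x : Δ ⧸ Subgroup.center Δ) = x := by
    refine ⟨fun x => if x = 1 then 1 else (e.symm x).out, if_pos rfl, fun x => ?_⟩
    by_cases hx : x = 1 <;> simp [hx]
  -- Two elements of `Δ` with the same image in `Γ` act by proportional operators.
  have hprop : ∀ d d' : Δ, e (d : Δ ⧸ Subgroup.center Δ) = e d' →
      ∃ z : Circle, φ d = (z : ℂ) • φ d' := fun d d' h => by
    have hmem : d'⁻¹ * d ∈ Subgroup.center Δ := QuotientGroup.eq.1 (e.injective h).symm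
    obtain ⟨z, hz⟩ := hirr.exists_circle_smul_eq_of_commute (hrep.1 (d'⁻¹ * d)) fun x => by
      rw [commute_iff_eq, ← hrep.2.2, ← hrep.2.2, Subgroup.mem_center_iff.1 hmem x]
    refine ⟨z, ?_⟩
    rw [← mul_inv_cancel_left d' d, hrep.2.2, hz, mul_smul_comm, mul_one]
  refine ⟨K, _, _, inferInstance, fun x => φ (s x),
    ⟨fun x => hrep.1 _, by simp only [hs1, hrep.2.1], fun x y => ?_⟩, fun L hL hinv => ?_, ?_⟩
  · rw [← hrep.2.2]
    exact hprop _ _ (by rw [QuotientGroup.mk_mul, map_mul, hs, hs, hs])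
  · refine hirr L hL fun d v hv => ?_
    obtain ⟨z, hz⟩ := hprop d (s (e d)) (hs _).symm
    rw [hz]
    exact L.smul_mem _ (hinv _ v hv)
  · rintro x ⟨z, hz⟩
    have hmem : s x ∈ Subgroup.center Δ := Subgroup.mem_center_iff.2 fun d => hinj <| by
      simp only [hrep.2.2, hz, mul_smul_comm, smul_mul_assoc, mul_one, one_mul]
    rw [← hs x, (QuotientGroup.eq_one_iff _).2 hmem, map_one]
end

section
/- A perfect group with non-trivial centre is incapable: if Γ is a group equal to its commutator subgroup and Z(Γ) ≠ {e}, then there is no group Δ such that Δ/Z(Δ) is isomorphic to Γ. -/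
open Subgroup in
/-- If the central quotient of `G` is perfect, then it is centreless (`G` itself need not be
perfect, unlike in Grün's lemma). -/
theorem center_quotient_center_eq_bot_of_commutator_eq_top {G : Type*} [Group G]
    (h : commutator (G ⧸ center G) = ⊤) : center (G ⧸ center G) = ⊥ := by
  set q := QuotientGroup.mk' (center G)
  have hq : Function.Surjective q := QuotientGroup.mk'_surjective _
  have hker : q.ker = center G := QuotientGroup.ker_mk' _
  set K := (center (G ⧸ center G)).comap q
  have hK : ⁅K, (⊤ : Subgroup G)⁆ ≤ center G := by
    rw [commutator_le]
    intro x hx y _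
    rw [← hker, MonoidHom.mem_ker, map_commutatorElement, commutatorElement_eq_one_iff_mul_comm]
    exact (mem_center_iff.mp hx (q y)).symm
  have hK' : ⁅⁅K, (⊤ : Subgroup G)⁆, ⊤⁆ = ⊥ :=
    commutator_top_right_eq_bot_iff_le_center.mpr hK
  have hcomm : commutator G ≤ centralizer K :=
    commutator_eq_bot_iff_le_centralizer.mp
      (commutator_commutator_eq_bot_of_rotate (by rwa [commutator_comm ⊤ K]) hK')
  have htop : commutator G ⊔ center G = ⊤ := by
    rw [← hker, ← comap_map_eq, commutator_def, map_commutator, map_top_of_surjective q hq,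
      ← commutator_def, h, comap_top]
  have hcent : centralizer (K : Set G) = ⊤ :=
    top_le_iff.mp (htop ▸ sup_le hcomm (center_le_centralizer _))
  have hKc : K ≤ center G := centralizer_eq_top_iff_subset.mp hcent
  rw [eq_bot_iff, ← map_comap_eq_self_of_surjective hq (center (G ⧸ center G)),
    map_le_iff_le_comap, MonoidHom.comap_bot, hker]
  exact hKc

/-- A perfect group with non-trivial centre is incapable. -/
theorem stmt_4 (Γ : Type*) [Group Γ] (hperf : commutator Γ = ⊤)
    (hcentre : Subgroup.center Γ ≠ ⊥) (Δ : Type*) [Group Δ] :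
    IsEmpty ((Δ ⧸ Subgroup.center Δ) ≃* Γ) := by
  refine ⟨fun e => hcentre ?_⟩
  have hquot : commutator (Δ ⧸ Subgroup.center Δ) = ⊤ :=
    have : Group.IsPerfect Γ := ⟨hperf⟩
    (Group.IsPerfect.ofSurjective (f := e.symm.toMonoidHom) e.symm.surjective).commutator_eq_top
  have hbot := center_quotient_center_eq_bot_of_commutator_eq_top hquot
  rw [Subgroup.eq_bot_iff_forall] at hbot ⊢
  intro x hx
  refine (map_eq_one_iff e.symm e.symm.injective).mp (hbot _ ?_)
  rw [Subgroup.mem_center_iff] at hx ⊢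
  intro y
  apply e.injective
  simpa using hx (e y)
end

section
/- Let Γ be a group, ζ ∈ Z²(Γ,T) a normalised multiplier, N a normal subgroup of Γ, and σ : N → U(H) a map with σ(e) = id and σ(x)σ(y) = ζ(x,y)σ(xy) for all x,y ∈ N. For γ ∈ Γ define σ^γ : N → U(H) by σ^γ(x) = ζ(γ,x)·ζ(γx,γ⁻¹)·σ(γxγ⁻¹). Then: (i) σ^γ(e) = id and σ^γ(x)·σ^γ(y) = ζ(x,y)·σ^γ(xy) for all x,y ∈ N; (ii) σ^{γ₁γ₂} = (σ^{γ₁})^{γ₂} for all γ₁, γ₂ ∈ Γ. -/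
/-- The scalar `ζ(γ,x)·ζ(γx,γ⁻¹)` by which conjugation by `γ` twists `x`. -/
noncomputable def conjCoeff {G : Type*} [Group G] (ζ : G → G → Circle) (γ x : G) : Circle :=
  ζ γ x * ζ (γ * x) γ⁻¹

section Multiplier

variable {G : Type*} [Group G] {ζ : G → G → Circle}

/-- The coefficient of a normalised multiplier is characterised by
`conjCoeff ζ γ x * ζ (γxγ⁻¹) γ = ζ γ x`. -/
theorem conjCoeff_mul (hζ : IsMultiplier ζ) (hnorm : IsNormalised ζ) (γ x : G) :
    conjCoeff ζ γ x * ζ (γ * x * γ⁻¹) γ = ζ γ x := by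
  have hinv : ζ γ⁻¹ γ = 1 := by simpa using hnorm γ⁻¹
  have hcocycle := hζ.2.2 (γ * x) γ⁻¹ γ
  rw [inv_mul_cancel, hζ.2.1, hinv, mul_one] at hcocycle
  rw [conjCoeff, mul_assoc, hcocycle, mul_one]

theorem conjCoeff_one_right (hζ : IsMultiplier ζ) (hnorm : IsNormalised ζ) (γ : G) :
    conjCoeff ζ γ 1 = 1 := by
  rw [conjCoeff, hζ.2.1, mul_one, hnorm, mul_one]

theorem conjCoeff_mul_conjCoeff (hζ : IsMultiplier ζ) (hnorm : IsNormalised ζ) (γ x y : G) :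
    conjCoeff ζ γ x * conjCoeff ζ γ y * ζ (γ * x * γ⁻¹) (γ * y * γ⁻¹) =
      ζ x y * conjCoeff ζ γ (x * y) := by
  have hx := conjCoeff_mul hζ hnorm γ x
  have hy := conjCoeff_mul hζ hnorm γ y
  have hxy := conjCoeff_mul hζ hnorm γ (x * y)
  have h₁ := hζ.2.2 (γ * x * γ⁻¹) (γ * y * γ⁻¹) γ
  have h₂ := hζ.2.2 (γ * x * γ⁻¹) γ y
  have h₃ := hζ.2.2 γ x y
  have hconj : γ * x * γ⁻¹ * (γ * y * γ⁻¹) = γ * (x * y) * γ⁻¹ := by group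
  rw [hconj, inv_mul_cancel_right] at h₁
  rw [inv_mul_cancel_right] at h₂
  apply mul_right_cancel (b := ζ (γ * (x * y) * γ⁻¹) γ)
  simp only [Circle.ext_iff, Circle.coe_mul] at *
  linear_combination (conjCoeff ζ γ x * conjCoeff ζ γ y : ℂ) * h₁ +
    (conjCoeff ζ γ x * ζ (γ * x * γ⁻¹) (γ * y) : ℂ) * hy - (conjCoeff ζ γ x : ℂ) * h₂ +
    (ζ (γ * x) y : ℂ) * hx + h₃ - (ζ x y : ℂ) * hxy

theorem conjCoeff_mul_left (hζ : IsMultiplier ζ) (hnorm : IsNormalised ζ) (g h x : G) :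
    conjCoeff ζ (g * h) x = conjCoeff ζ h x * conjCoeff ζ g (h * x * h⁻¹) := by
  have hgh := conjCoeff_mul hζ hnorm (g * h) x
  have hh := conjCoeff_mul hζ hnorm h x
  have hg := conjCoeff_mul hζ hnorm g (h * x * h⁻¹)
  have hconj : g * h * x * (g * h)⁻¹ = g * (h * x * h⁻¹) * g⁻¹ := by group
  rw [hconj] at hgh
  have h₁ := hζ.2.2 (g * (h * x * h⁻¹) * g⁻¹) g h
  have h₂ := hζ.2.2 g (h * x * h⁻¹) h
  have h₃ := hζ.2.2 g h x
  rw [inv_mul_cancel_right] at h₁ h₂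
  apply mul_right_cancel (b := ζ (g * (h * x * h⁻¹) * g⁻¹) (g * h) * ζ g h)
  simp only [Circle.ext_iff, Circle.coe_mul] at *
  linear_combination (ζ g h : ℂ) * hgh + h₃ - (ζ g (h * x) : ℂ) * hh -
    (conjCoeff ζ h x : ℂ) * h₂ -
    (conjCoeff ζ h x * ζ (g * (h * x * h⁻¹)) h : ℂ) * hg +
    (conjCoeff ζ h x * conjCoeff ζ g (h * x * h⁻¹) : ℂ) * h₁

end Multiplier

section Conjugate

variable {G : Type*} [Group G] {H : Type*} [NormedAddCommGroup H] [InnerProductSpace ℂ H]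
  [CompleteSpace H]

theorem circle_smul_mem_unitary (z : Circle) {T : H →L[ℂ] H} (hT : T ∈ unitary (H →L[ℂ] H)) :
    (z : ℂ) • T ∈ unitary (H →L[ℂ] H) := by
  have hz : star (z : ℂ) * z = 1 := by
    rw [Complex.star_def, ← Circle.coe_inv_eq_conj, ← Circle.coe_mul, inv_mul_cancel,
      Circle.coe_one]
  rw [Unitary.mem_iff] at hT ⊢
  simp only [star_smul, smul_mul_smul_comm, hT.1, hT.2, mul_comm (z : ℂ), hz, one_smul, and_self]

theorem conjRep_apply (ζ : G → G → Circle) {N : Subgroup G} (hN : N.Normal)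
    (σ : N → (H →L[ℂ] H)) (γ : G) (x : N) :
    conjRep ζ N σ γ x =
      (conjCoeff ζ γ x : ℂ) • σ ⟨γ * (x : G) * γ⁻¹, hN.conj_mem x x.2 γ⟩ := by
  rw [conjRep, dif_pos (hN.conj_mem x x.2 γ), conjCoeff, Circle.coe_mul]

theorem isZetaRepOn_conjRep {ζ : G → G → Circle} (hζ : IsMultiplier ζ)
    (hnorm : IsNormalised ζ) {N : Subgroup G} (hN : N.Normal) {σ : N → (H →L[ℂ] H)}
    (hσ : IsZetaRepOn ζ N σ) (γ : G) : IsZetaRepOn ζ N (conjRep ζ N σ γ) := by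
  refine ⟨fun x => ?_, ?_, fun x y => ?_⟩
  · rw [conjRep_apply ζ hN]
    exact circle_smul_mem_unitary _ (hσ.1 _)
  · have hone : (⟨γ * ((1 : N) : G) * γ⁻¹, hN.conj_mem _ (1 : N).2 γ⟩ : N) = 1 :=
      Subtype.ext (by simp)
    rw [conjRep_apply ζ hN, hone, hσ.2.1, Subgroup.coe_one, conjCoeff_one_right hζ hnorm,
      Circle.coe_one, one_smul]
  · have hmul : (⟨γ * (x : G) * γ⁻¹, hN.conj_mem x x.2 γ⟩ : N) *
        ⟨γ * (y : G) * γ⁻¹, hN.conj_mem y y.2 γ⟩ =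
        ⟨γ * ((x * y : N) : G) * γ⁻¹, hN.conj_mem _ (x * y).2 γ⟩ :=
      Subtype.ext (by simp [mul_assoc])
    simp only [conjRep_apply ζ hN]
    rw [smul_mul_smul_comm, hσ.2.2, hmul, smul_smul, smul_smul]
    congr 1
    exact congrArg ((↑) : Circle → ℂ) (conjCoeff_mul_conjCoeff hζ hnorm γ x y)

theorem conjRep_mul {ζ : G → G → Circle} (hζ : IsMultiplier ζ) (hnorm : IsNormalised ζ)
    {N : Subgroup G} (hN : N.Normal) (σ : N → (H →L[ℂ] H)) (g h : G) :
    conjRep ζ N σ (g * h) = conjRep ζ N (conjRep ζ N σ g) h := by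
  funext x
  simp only [conjRep_apply ζ hN, smul_smul]
  rw [conjCoeff_mul_left hζ hnorm, Circle.coe_mul]
  congr 2
  exact Subtype.ext (by simp [mul_assoc])

end Conjugate

/-- For a normalised multiplier ζ and a ζ-representation σ of a normal subgroup N:
(i) each conjugate σ^γ is again a ζ-representation of N; (ii) σ^{γ₁γ₂} = (σ^{γ₁})^{γ₂}. -/
theorem stmt_9 (Γ : Type*) [Group Γ] (H : Type*) [NormedAddCommGroup H]
    [InnerProductSpace ℂ H] [CompleteSpace H] (ζ : Γ → Γ → Circle) (hζ : IsMultiplier ζ)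
    (hnorm : IsNormalised ζ) (N : Subgroup Γ) (hN : N.Normal)
    (σ : N → (H →L[ℂ] H)) (hσ : IsZetaRepOn ζ N σ) :
    (∀ γ : Γ, IsZetaRepOn ζ N (conjRep ζ N σ γ)) ∧
      ∀ γ₁ γ₂ : Γ, conjRep ζ N σ (γ₁ * γ₂) = conjRep ζ N (conjRep ζ N σ γ₁) γ₂ := by
  exact ⟨isZetaRepOn_conjRep hζ hnorm hN hσ, conjRep_mul hζ hnorm hN σ⟩
end

section
/- (P. Hall) Let Γ be a group containing an element s₀ ≠ e such that the set {s ∈ Γ : there exists n ∈ ℤ with sⁿ = s₀} generates Γ. Then Γ is incapable: there is no group Δ such that Δ/Z(Δ) is isomorphic to Γ. -/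
/-- In a central extension, any lift of an element whose roots generate the quotient is central. -/
theorem MonoidHom.mem_center_of_closure_roots_eq_top {Δ Γ : Type*} [Group Δ] [Group Γ]
    (f : Δ →* Γ) (hf : Function.Surjective f) (hker : f.ker ≤ Subgroup.center Δ) (t₀ : Δ)
    (hgen : Subgroup.closure {s : Γ | ∃ n : ℤ, s ^ n = f t₀} = ⊤) :
    t₀ ∈ Subgroup.center Δ := by
  have hkerC : f.ker ≤ Subgroup.centralizer {t₀} :=
    hker.trans (Subgroup.center_le_centralizer _)
  have hmap : (Subgroup.centralizer {t₀}).map f = ⊤ := by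
    rw [eq_top_iff, ← hgen, Subgroup.closure_le]
    rintro s ⟨n, hn⟩
    obtain ⟨t, rfl⟩ := hf s
    refine ⟨t, Subgroup.mem_centralizer_singleton_iff.2 ?_, rfl⟩
    have hz : (t ^ n)⁻¹ * t₀ ∈ Subgroup.center Δ :=
      hker (by rw [MonoidHom.mem_ker, map_mul, map_inv, map_zpow, hn, inv_mul_cancel])
    have hcomm : Commute t (t ^ n * ((t ^ n)⁻¹ * t₀)) :=
      (Commute.self_zpow t n).mul_right (Subgroup.mem_center_iff.1 hz t)
    rw [mul_inv_cancel_left] at hcomm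
    exact hcomm.eq
  have htop : Subgroup.centralizer {t₀} = ⊤ := by
    rw [← Subgroup.comap_map_eq_self hkerC, hmap, Subgroup.comap_top]
  refine Subgroup.mem_center_iff.2 fun g => ?_
  exact Subgroup.mem_centralizer_singleton_iff.1 (htop ▸ Subgroup.mem_top g)

/-- P. Hall's lemma: if some `s₀ ≠ 1` is such that its "roots" generate Γ, then Γ is
incapable. -/
theorem stmt_11 (Γ : Type*) [Group Γ] (s₀ : Γ) (hs₀ : s₀ ≠ 1)
    (hgen : Subgroup.closure {s : Γ | ∃ n : ℤ, s ^ n = s₀} = ⊤)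
    (Δ : Type*) [Group Δ] :
    IsEmpty ((Δ ⧸ Subgroup.center Δ) ≃* Γ) := by
  refine ⟨fun e => hs₀ ?_⟩
  let f : Δ →* Γ := e.toMonoidHom.comp (QuotientGroup.mk' (Subgroup.center Δ))
  have hf : Function.Surjective f := e.surjective.comp (QuotientGroup.mk'_surjective _)
  have hker : f.ker = Subgroup.center Δ := by
    ext x
    simp [f]
  obtain ⟨t₀, rfl⟩ := hf s₀
  exact MonoidHom.mem_ker.1
    (hker ▸ f.mem_center_of_closure_roots_eq_top hf hker.le t₀ hgen)
end

section
/- Every nontrivial subgroup of the additive group ℚ of rational numbers is incapable: if Γ is a subgroup of (ℚ, +) with Γ ≠ {0}, then there is no group Δ such that Δ/Z(Δ) is isomorphic to Γ. -/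
/-- Any two elements of a subgroup of `ℚ` are integer multiples of a common element. -/
theorem AddSubgroup.exists_common_zsmul_of_rat (Γ : AddSubgroup ℚ) (a b : Γ) :
    ∃ (c : Γ) (m n : ℤ), a = m • c ∧ b = n • c := by
  obtain ⟨a, ha⟩ := a
  obtain ⟨b, hb⟩ := b
  have ha0 : (a.den : ℚ) ≠ 0 := Nat.cast_ne_zero.mpr a.den_ne_zero
  have hb0 : (b.den : ℚ) ≠ 0 := Nat.cast_ne_zero.mpr b.den_ne_zero
  set A : ℤ := a.num * b.den
  set B : ℤ := b.num * a.den
  have hA : (A : ℚ) = a * (a.den * b.den) := by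
    simp only [A, Int.cast_mul, Int.cast_natCast, ← mul_assoc, Rat.mul_den_eq_num]
  have hB : (B : ℚ) = b * (a.den * b.den) := by
    simp only [B, Int.cast_mul, Int.cast_natCast, mul_comm (a.den : ℚ), ← mul_assoc,
      Rat.mul_den_eq_num]
  obtain ⟨m, hm⟩ := Int.gcd_dvd_left A B
  obtain ⟨n, hn⟩ := Int.gcd_dvd_right A B
  set u := Int.gcdA A B
  set v := Int.gcdB A B
  have key : ((Int.gcd A B : ℤ) : ℚ) = (u * a + v * b) * (a.den * b.den) := by
    rw [Int.gcd_eq_gcd_ab A B]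
    push_cast
    rw [hA, hB]
    ring
  have hden : (a.den * b.den : ℚ) ≠ 0 := mul_ne_zero ha0 hb0
  refine ⟨⟨u • a + v • b, Γ.add_mem (Γ.zsmul_mem ha u) (Γ.zsmul_mem hb v)⟩, m, n, ?_, ?_⟩ <;>
    apply Subtype.ext <;> apply mul_right_cancel₀ hden <;>
    simp only [AddSubgroup.coe_zsmul, zsmul_eq_mul]
  · rw [← hA, hm, Int.cast_mul, key]
    ring
  · rw [← hB, hn, Int.cast_mul, key]
    ring

/-- If any two elements of `G ⧸ center G` are powers of a common element, then `G` is
commutative. -/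
theorem Subgroup.center_eq_top_of_quotient_locally_cyclic {G : Type*} [Group G]
    (h : ∀ a b : G ⧸ Subgroup.center G, ∃ (c : G ⧸ Subgroup.center G) (m n : ℤ),
      a = c ^ m ∧ b = c ^ n) : Subgroup.center G = ⊤ := by
  refine (Subgroup.eq_top_iff' _).mpr fun x => Subgroup.mem_center_iff.mpr fun y => ?_
  obtain ⟨c, m, n, hx, hy⟩ := h x y
  obtain ⟨z, rfl⟩ := QuotientGroup.mk_surjective c
  have eq_zpow_mul {w : G} {k : ℤ} (hw : (w : G ⧸ Subgroup.center G) = (z : G ⧸ _) ^ k) :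
      ∃ s ∈ Subgroup.center G, w = z ^ k * s := by
    rw [← QuotientGroup.mk_zpow, eq_comm, QuotientGroup.eq] at hw
    exact ⟨_, hw, by group⟩
  obtain ⟨s, hs, rfl⟩ := eq_zpow_mul hx
  obtain ⟨t, ht, rfl⟩ := eq_zpow_mul hy
  have hs' : ∀ g, Commute g s := Subgroup.mem_center_iff.mp hs
  have ht' : ∀ g, Commute g t := Subgroup.mem_center_iff.mp ht
  exact Commute.mul_right (.mul_left (Commute.zpow_zpow_self z n m) (ht' _).symm) (hs' _)

/-- Every nontrivial subgroup of (ℚ, +) is incapable. -/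
theorem stmt_12 (Γ : AddSubgroup ℚ) (hΓ : Γ ≠ ⊥) (Δ : Type*) [Group Δ] :
    IsEmpty ((Δ ⧸ Subgroup.center Δ) ≃* Multiplicative Γ) := by
  refine ⟨fun e => hΓ ?_⟩
  have hc : Subgroup.center Δ = ⊤ := by
    refine Subgroup.center_eq_top_of_quotient_locally_cyclic fun a b => ?_
    obtain ⟨c, m, n, ha, hb⟩ :=
      Γ.exists_common_zsmul_of_rat (e a).toAdd (e b).toAdd
    refine ⟨e.symm (.ofAdd c), m, n, e.injective ?_, e.injective ?_⟩ <;>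
      rw [map_zpow, e.apply_symm_apply, ← ofAdd_zsmul]
    · exact congrArg Multiplicative.ofAdd ha
    · exact congrArg Multiplicative.ofAdd hb
  have : Subsingleton (Δ ⧸ Subgroup.center Δ) := QuotientGroup.subsingleton_iff.mpr hc
  have : Subsingleton Γ := (e.symm.toEquiv.subsingleton : Subsingleton (Multiplicative Γ))
  exact (AddSubgroup.eq_bot_iff_forall Γ).mpr fun x hx =>
    congrArg Subtype.val (Subsingleton.elim (⟨x, hx⟩ : Γ) 0)
end

section
/- The group SL₂(ℤ) of 2 × 2 integer matrices of determinant 1 is incapable: there is no group Δ such that Δ/Z(Δ) is isomorphic to SL₂(ℤ). -/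
/-- In a central extension of `SL₂(ℤ)`, the square of any lift of `S` is central, because
`S ^ 2 = (S * T) ^ 3` while `S` and `S * T` generate `SL₂(ℤ)`. -/
theorem sq_mem_center_of_map_eq_S {Δ : Type*} [Group Δ]
    (q : Δ →* Matrix.SpecialLinearGroup (Fin 2) ℤ) (hq : Function.Surjective q)
    (hker : q.ker ≤ Subgroup.center Δ) {s : Δ} (hs : q s = ModularGroup.S) :
    s ^ 2 ∈ Subgroup.center Δ := by
  obtain ⟨t, ht⟩ := hq ModularGroup.T
  have hrel : ModularGroup.S ^ 2 = (ModularGroup.S * ModularGroup.T) ^ 3 := by decide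
  have hz : s ^ 2 * ((s * t) ^ 3)⁻¹ ∈ Subgroup.center Δ := by
    apply hker
    simp only [MonoidHom.mem_ker, map_mul, map_inv, map_pow, hs, ht, hrel, mul_inv_cancel]
  have hcs : Commute s (s ^ 2) := Commute.self_pow s 2
  have hcu : Commute (s * t) (s ^ 2) := by
    rw [← inv_mul_cancel_right (s ^ 2) ((s * t) ^ 3)]
    exact Commute.mul_right (Subgroup.mem_center_iff.mp hz (s * t)) (Commute.self_pow _ 3)
  have hct : Commute t (s ^ 2) := by
    simpa using hcs.inv_left.mul_left hcu
  have hmap : (Subgroup.centralizer {s ^ 2}).map q = ⊤ := by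
    rw [eq_top_iff, ← SpecialLinearGroup.SL2Z_generators, Subgroup.closure_le]
    rintro x (rfl | rfl)
    · exact ⟨s, Subgroup.mem_centralizer_singleton_iff.mpr hcs.eq, hs⟩
    · exact ⟨t, Subgroup.mem_centralizer_singleton_iff.mpr hct.eq, ht⟩
  have htop : Subgroup.centralizer {s ^ 2} = ⊤ := by
    rw [← Subgroup.comap_map_eq_self (hker.trans (Subgroup.center_le_centralizer {s ^ 2})), hmap,
      Subgroup.comap_top]
  exact Subgroup.centralizer_eq_top_iff_subset.mp htop rfl

/-- SL₂(ℤ) is incapable. -/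
theorem stmt_13 (Δ : Type*) [Group Δ] :
    IsEmpty ((Δ ⧸ Subgroup.center Δ) ≃* Matrix.SpecialLinearGroup (Fin 2) ℤ) := by
  refine ⟨fun e => ?_⟩
  let q := e.toMonoidHom.comp (QuotientGroup.mk' (Subgroup.center Δ))
  have hker : q.ker = Subgroup.center Δ := by
    ext x
    simp [q]
  have hq : Function.Surjective q := e.surjective.comp (QuotientGroup.mk'_surjective _)
  obtain ⟨s, hs⟩ := hq ModularGroup.S
  have hmem := sq_mem_center_of_map_eq_S q hq hker.le hs
  rw [← hker, MonoidHom.mem_ker, map_pow, hs] at hmem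
  exact absurd hmem (by decide)
end

section
/- Let m ≥ 2 and let d₁, …, d_m ≥ 2 be integers with dᵢ dividing dᵢ₊₁ for 1 ≤ i ≤ m−1 and with d_{m−1} < d_m. Then the finite abelian group (ℤ/d₁ℤ) × ⋯ × (ℤ/d_mℤ) is incapable: there is no group Δ such that Δ/Z(Δ) is isomorphic to it. -/
open scoped commutatorElement

/-- If the commutator of `a` and `b` is central and `b ^ n` commutes with `a`, then so does
`a ^ n` with `b`. -/
theorem commute_pow_of_commutator_mem_center {G : Type*} [Group G] {a b : G} {n : ℕ}
    (hc : ⁅a, b⁆ ∈ Subgroup.center G) (h : Commute a (b ^ n)) : Commute (a ^ n) b := by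
  obtain ⟨c, hcdef⟩ : ∃ c, c = ⁅a, b⁆ := ⟨_, rfl⟩
  rw [← hcdef, Subgroup.mem_center_iff] at hc
  have hcomm : ∀ g, Commute c g := fun g => (hc g).symm
  have hab : a * b * a⁻¹ = c * b := by
    rw [hcdef, commutatorElement_def]; group
  have hba : b * a * b⁻¹ = c⁻¹ * a := by
    rw [hcdef, commutatorElement_def]; group
  have hcn : c ^ n = 1 := by
    have h1 : a * b ^ n * a⁻¹ = c ^ n * b ^ n := by
      rw [← conj_pow, hab, (hcomm b).mul_pow]
    rw [h.eq, mul_inv_cancel_right] at h1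
    exact mul_eq_right.mp h1.symm
  have h2 : b * a ^ n * b⁻¹ = a ^ n := by
    rw [← conj_pow, hba, ((hcomm a).inv_left).mul_pow, inv_pow, hcn, inv_one, one_mul]
  exact (mul_inv_eq_iff_eq_mul.mp h2).symm

/-- Let `f` be a homomorphism to a commutative group whose kernel is the centre. If every element
of the source is, up to a power of `a`, killed by `n` in the target, then `a ^ n` is central. -/
theorem pow_mem_center_of_ker_eq_center {G A : Type*} [Group G] [CommGroup A] (f : G →* A)
    (hf : f.ker = Subgroup.center G) {a : G} {n : ℕ}
    (h : ∀ y, ∃ k : ℕ, f (y * (a ^ k)⁻¹) ^ n = 1) : a ^ n ∈ Subgroup.center G := by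
  rw [Subgroup.mem_center_iff]
  intro y
  obtain ⟨k, hk⟩ := h y
  have hpow : (y * (a ^ k)⁻¹) ^ n ∈ Subgroup.center G := by
    rw [← hf, MonoidHom.mem_ker, map_pow, hk]
  have hcomm : ⁅a, y * (a ^ k)⁻¹⁆ ∈ Subgroup.center G := by
    rw [← hf, MonoidHom.mem_ker, map_commutatorElement, commutatorElement_eq_one_iff_mul_comm,
      mul_comm]
  have h1 : Commute (a ^ n) (y * (a ^ k)⁻¹) :=
    commute_pow_of_commutator_mem_center hcomm (Subgroup.mem_center_iff.mp hpow a)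
  have h2 := h1.mul_right (Commute.pow_pow_self a n k)
  rw [inv_mul_cancel_right] at h2
  exact h2.symm.eq

/-- Along a divisibility chain, every term divides each later one. -/
theorem dvd_of_le_of_dvd_succ {m : ℕ} {d : Fin m → ℕ}
    (hchain : ∀ i : Fin m, ∀ h : (i : ℕ) + 1 < m, d i ∣ d ⟨(i : ℕ) + 1, h⟩)
    (i : Fin m) {j : ℕ} (hij : (i : ℕ) ≤ j) (hj : j < m) : d i ∣ d ⟨j, hj⟩ := by
  induction j, hij using Nat.le_induction with
  | base => exact dvd_rfl
  | succ j _ ih => exact (ih (by omega)).trans (hchain ⟨j, by omega⟩ hj)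

/-- A finite abelian group `ℤ/d₁ × ⋯ × ℤ/d_m` with `d₁ ∣ d₂ ∣ ⋯ ∣ d_m`, all `dᵢ ≥ 2`,
`m ≥ 2` and `d_{m-1} < d_m` is incapable. -/
theorem stmt_14 (m : ℕ) (hm : 2 ≤ m) (d : Fin m → ℕ) (hd : ∀ i, 2 ≤ d i)
    (hchain : ∀ i : Fin m, ∀ h : (i : ℕ) + 1 < m, d i ∣ d ⟨(i : ℕ) + 1, h⟩)
    (hlt : d ⟨m - 2, by omega⟩ < d ⟨m - 1, by omega⟩)
    (Δ : Type*) [Group Δ] :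
    IsEmpty ((Δ ⧸ Subgroup.center Δ) ≃* Multiplicative (∀ i : Fin m, ZMod (d i))) := by
  refine ⟨fun e => ?_⟩
  set last : Fin m := ⟨m - 1, by omega⟩
  set n := d ⟨m - 2, by omega⟩
  let f : Δ →* Multiplicative (∀ i : Fin m, ZMod (d i)) :=
    e.toMonoidHom.comp (QuotientGroup.mk' (Subgroup.center Δ))
  have hker : f.ker = Subgroup.center Δ := by
    ext x
    simp [f]
  have hsurj : Function.Surjective f := e.surjective.comp (QuotientGroup.mk'_surjective _)
  obtain ⟨a, ha⟩ := hsurj (Multiplicative.ofAdd (Pi.single last 1))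
  have hpos : 0 < n := by have := hd ⟨m - 2, by omega⟩; omega
  have hcenter : a ^ n ∈ Subgroup.center Δ := by
    refine pow_mem_center_of_ker_eq_center f hker fun y => ?_
    have : NeZero (d last) := ⟨by have := hd last; omega⟩
    refine ⟨((f y).toAdd last).val, ?_⟩
    apply Multiplicative.toAdd.injective
    funext i
    rw [map_mul f, map_inv f, map_pow f, ha]
    by_cases hi : i = last
    · subst hi
      simp [-ZMod.natCast_val, ZMod.natCast_zmod_val]
    · have hne : (i : ℕ) ≠ m - 1 := fun h => hi (Fin.ext h)
      have hdvd : d i ∣ n :=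
        dvd_of_le_of_dvd_succ hchain i (by have := i.isLt; omega) (by omega)
      simp [hi, (ZMod.natCast_eq_zero_iff n (d i)).mpr hdvd]
  rw [← hker, MonoidHom.mem_ker, map_pow, ha] at hcenter
  have hzero : ((n : ℕ) : ZMod (d last)) = 0 := by
    simpa using congrFun (congrArg Multiplicative.toAdd hcenter) last
  exact absurd (Nat.le_of_dvd hpos ((ZMod.natCast_eq_zero_iff _ _).mp hzero)) (by omega)
end

section
/- Let Γ be a countable group and ζ ∈ Z²(Γ,T) a normalised multiplier. If Γ has a ζ-representation which is both irreducible and projectively faithful, then the minisocle MS(Γ) has an irreducible Γ-P-faithful ζ-representation (with respect to the restriction of ζ to MS(Γ) × MS(Γ)). -/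
section StateSpace

open scoped InnerProductSpace ComplexOrder

variable {A : Type*} [CStarAlgebra A] {H : Type*} [NormedAddCommGroup H]
  [InnerProductSpace ℂ H] [CompleteSpace H]

/-- The functional `a ↦ ⟪η, ρ a η⟫` attached to a vector `η` of a representation `ρ`. -/
noncomputable def vectorFunctional (ρ : A →⋆ₐ[ℂ] (H →L[ℂ] H)) (η : H) : A →L[ℂ] ℂ :=
  LinearMap.mkContinuous
    { toFun := fun a ↦ ⟪η, ρ a η⟫_ℂ
      map_add' := fun a b ↦ by simp
      map_smul' := fun c a ↦ by simp }
    (‖η‖ ^ 2) fun a ↦ by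
      refine (norm_inner_le_norm _ _).trans ?_
      have h := (ρ a).le_opNorm η
      have h' : ‖ρ a‖ ≤ ‖a‖ := NonUnitalStarAlgHom.norm_apply_le ρ a
      have := norm_nonneg η
      calc ‖η‖ * ‖ρ a η‖ ≤ ‖η‖ * (‖a‖ * ‖η‖) := by gcongr; exact h.trans (by gcongr)
        _ = _ := by ring

theorem vectorFunctional_apply (ρ : A →⋆ₐ[ℂ] (H →L[ℂ] H)) (η : H) (a : A) :
    vectorFunctional ρ η a = ⟪η, ρ a η⟫_ℂ := rfl

variable (A) in
/-- The state space of a unital C⋆-algebra, as a subset of the weak dual. -/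
def stateSpace : Set (WeakDual ℂ A) :=
  {φ | (∀ a, 0 ≤ φ (star a * a)) ∧ φ 1 = 1 ∧ ∀ a, ‖φ a‖ ≤ ‖a‖}

theorem isCompact_stateSpace : IsCompact (stateSpace A) := by
  refine (WeakDual.isCompact_closedBall (𝕜 := ℂ) (E := A) 0 1).of_isClosed_subset ?_ ?_
  · have h : ∀ a : A, Continuous fun φ : WeakDual ℂ A ↦ φ a := WeakDual.eval_continuous
    simp only [stateSpace, Set.ofPred_and, Set.ofPred_forall]
    exact (isClosed_iInter fun a ↦ isClosed_le continuous_const (h _)).inter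
      ((isClosed_eq (h _) continuous_const).inter
        (isClosed_iInter fun a ↦ isClosed_le (h _).norm continuous_const))
  · intro φ hφ
    rw [Set.mem_preimage, mem_closedBall_zero_iff]
    exact ContinuousLinearMap.opNorm_le_bound _ zero_le_one fun a ↦ by
      simpa using hφ.2.2 a

theorem inv_norm_sq_smul_vectorFunctional_mem_stateSpace (ρ : A →⋆ₐ[ℂ] (H →L[ℂ] H)) {η : H}
    (hη : η ≠ 0) :
    (((‖η‖ ^ 2)⁻¹ : ℝ) • StrongDual.toWeakDual (vectorFunctional ρ η) : WeakDual ℂ A) ∈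
      stateSpace A := by
  have h0 : 0 < ‖η‖ ^ 2 := by positivity
  have key : ∀ a, (((‖η‖ ^ 2)⁻¹ : ℝ) • StrongDual.toWeakDual (vectorFunctional ρ η) :
      WeakDual ℂ A) a = (((‖η‖ ^ 2)⁻¹ : ℝ) : ℂ) * ⟪η, ρ a η⟫_ℂ := fun a ↦ rfl
  refine ⟨fun a ↦ ?_, ?_, fun a ↦ ?_⟩
  · rw [key, map_mul, map_star, ContinuousLinearMap.star_eq_adjoint,
      mul_apply_eq_comp, ContinuousLinearMap.adjoint_inner_right]
    have h1 : (0 : ℂ) ≤ (((‖η‖ ^ 2)⁻¹ : ℝ) : ℂ) := by exact_mod_cast (inv_pos.2 h0).le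
    refine mul_nonneg h1 ?_
    rw [inner_self_eq_norm_sq_to_K]
    exact pow_nonneg (Complex.zero_le_real.2 (norm_nonneg (ρ a η))) 2
  · rw [key, map_one, one_apply_eq_self, inner_self_eq_norm_sq_to_K]
    have : (‖η‖ : ℂ) ≠ 0 := by simpa using hη
    push_cast
    exact inv_mul_cancel₀ (pow_ne_zero 2 this)
  · have h := (vectorFunctional ρ η).le_of_opNorm_le
      (LinearMap.mkContinuous_norm_le _ (sq_nonneg ‖η‖) _) a
    rw [vectorFunctional_apply] at h
    rw [key, norm_mul, Complex.norm_real, Real.norm_of_nonneg (inv_pos.2 h0).le,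
      inv_mul_le_iff₀ h0]
    exact h

/-- A cyclic representation whose vector state is extreme in the state space is irreducible. -/
theorem isIrreducibleRep_of_mem_extremePoints (ρ : A →⋆ₐ[ℂ] (H →L[ℂ] H)) (ξ : H)
    (hcyc : DenseRange fun a ↦ ρ a ξ) (hξ : ‖ξ‖ = 1)
    (hext : StrongDual.toWeakDual (vectorFunctional ρ ξ) ∈ (stateSpace A).extremePoints ℝ) :
    IsIrreducibleRep (⇑ρ) := by
  intro K hK hinv
  have : CompleteSpace K := hK.completeSpace_coe
  have hinv' : ∀ a, ∀ v ∈ Kᗮ, ρ a v ∈ Kᗮ := fun a v hv ↦ by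
    rw [Submodule.mem_orthogonal]
    intro u hu
    rw [← ContinuousLinearMap.adjoint_inner_left, ← ContinuousLinearMap.star_eq_adjoint,
      ← map_star]
    exact Submodule.inner_right_of_mem_orthogonal (hinv _ _ hu) hv
  have eq_top : ∀ L : Submodule ℂ H, IsClosed (L : Set H) → (∀ a, ∀ v ∈ L, ρ a v ∈ L) →
      ξ ∈ L → L = ⊤ := fun L hL hLinv hmem ↦ by
    rw [eq_top_iff]
    exact fun v _ ↦ hcyc.induction_on v hL fun a ↦ hLinv a ξ hmem
  obtain ⟨η, hη, η', hη', hsum⟩ := Submodule.exists_add_mem_mem_orthogonal (K := K) ξ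
  by_cases h0 : η = 0
  · left
    rw [← Submodule.orthogonal_eq_top_iff]
    exact eq_top _ (Submodule.isClosed_orthogonal _) hinv' (by simpa [hsum, h0] using hη')
  right
  refine eq_top K hK hinv ?_
  by_cases h0' : η' = 0
  · simpa [hsum, h0'] using hη
  have ho : ∀ a, ⟪η, ρ a η'⟫_ℂ = 0 := fun a ↦
    Submodule.inner_right_of_mem_orthogonal hη (hinv' a _ hη')
  have ho' : ∀ a, ⟪η', ρ a η⟫_ℂ = 0 := fun a ↦
    Submodule.inner_left_of_mem_orthogonal (hinv a _ hη) hη'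
  have hpos : 0 < ‖η‖ ^ 2 := by positivity
  have hpos' : 0 < ‖η'‖ ^ 2 := by positivity
  have hnorm : ‖η‖ ^ 2 + ‖η'‖ ^ 2 = 1 := by
    have := norm_add_sq_eq_norm_sq_add_norm_sq_of_inner_eq_zero (𝕜 := ℂ) η η'
      (by simpa using ho 1)
    rw [← hsum, hξ] at this
    linarith
  have hdec : (‖η‖ ^ 2) • (((‖η‖ ^ 2)⁻¹ : ℝ) • StrongDual.toWeakDual (vectorFunctional ρ η)) +
      (‖η'‖ ^ 2) • (((‖η'‖ ^ 2)⁻¹ : ℝ) • StrongDual.toWeakDual (vectorFunctional ρ η')) =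
      (StrongDual.toWeakDual (vectorFunctional ρ ξ) : WeakDual ℂ A) := by
    refine DFunLike.ext _ _ fun a ↦ ?_
    change (‖η‖ ^ 2) • ((‖η‖ ^ 2)⁻¹ • ⟪η, ρ a η⟫_ℂ) + (‖η'‖ ^ 2) • ((‖η'‖ ^ 2)⁻¹ • ⟪η', ρ a η'⟫_ℂ) =
      ⟪ξ, ρ a ξ⟫_ℂ
    rw [smul_inv_smul₀ hpos.ne', smul_inv_smul₀ hpos'.ne', hsum]
    simp [ho, ho']
  have hψ := hext.2 (inv_norm_sq_smul_vectorFunctional_mem_stateSpace ρ h0)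
    (inv_norm_sq_smul_vectorFunctional_mem_stateSpace ρ h0')
    ⟨‖η‖ ^ 2, ‖η'‖ ^ 2, hpos, hpos', hnorm, hdec⟩
  have horth : ∀ a, ⟪η - ((‖η‖ ^ 2 : ℝ) : ℂ) • ξ, ρ a ξ⟫_ℂ = 0 := fun a ↦ by
    have h : (((‖η‖ ^ 2)⁻¹ : ℝ) : ℂ) * ⟪η, ρ a η⟫_ℂ = ⟪ξ, ρ a ξ⟫_ℂ := DFunLike.congr_fun hψ a
    have h2 : ⟪η, ρ a ξ⟫_ℂ = ⟪η, ρ a η⟫_ℂ := by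
      rw [hsum, map_add, inner_add_right, ho, add_zero]
    have hne : ((‖η‖ ^ 2 : ℝ) : ℂ) ≠ 0 := by exact_mod_cast hpos.ne'
    rw [inner_sub_left, inner_smul_left, Complex.conj_ofReal, h2, ← h, ← mul_assoc,
      Complex.ofReal_inv, mul_inv_cancel₀ hne, one_mul, sub_self]
  have hzero : η - ((‖η‖ ^ 2 : ℝ) : ℂ) • ξ = 0 := by
    refine ext_inner_right ℂ fun v ↦ ?_
    rw [inner_zero_left]
    refine hcyc.induction_on v (isClosed_eq (by fun_prop) continuous_const) horth
  have hne : ((‖η‖ ^ 2 : ℝ) : ℂ) ≠ 0 := by exact_mod_cast hpos.ne'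
  rw [← Submodule.smul_mem_iff K hne, ← sub_eq_zero.1 hzero]
  exact hη

/-- A unital C⋆-algebra with a nonzero representation has a nonzero irreducible one. -/
theorem exists_isIrreducibleRep_starAlgHom.{u} [Nontrivial H] {A : Type u} [CStarAlgebra A]
    (τ : A →⋆ₐ[ℂ] (H →L[ℂ] H)) :
    ∃ (K : Type u) (_ : NormedAddCommGroup K) (_ : InnerProductSpace ℂ K) (_ : CompleteSpace K)
      (ρ : A →⋆ₐ[ℂ] (K →L[ℂ] K)), Nontrivial K ∧ IsIrreducibleRep (⇑ρ) := by
  obtain ⟨η, hη⟩ := exists_ne (0 : H)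
  have : LocallyConvexSpace ℝ (WeakDual ℂ A) :=
    inferInstanceAs (LocallyConvexSpace ℝ (WeakBilin (topDualPairing ℂ A)))
  obtain ⟨φ, hφ⟩ := isCompact_stateSpace.extremePoints_nonempty
    ⟨_, inv_norm_sq_smul_vectorFunctional_mem_stateSpace τ hη⟩
  let _ := CStarAlgebra.spectralOrder A
  have _ := CStarAlgebra.spectralOrderedRing A
  let f : A →ₚ[ℂ] ℂ := PositiveLinearMap.mk₀ (WeakDual.toStrongDual φ).toLinearMap fun x hx ↦ by
    obtain ⟨b, rfl⟩ := CStarAlgebra.nonneg_iff_eq_star_mul_self.1 hx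
    exact hφ.1.1 b
  have hf : ∀ a, f a = φ a := fun _ ↦ rfl
  let ξ : f.GNS := (f.toPreGNS 1 : f.PreGNS)
  have hρ : ∀ a, f.gnsStarAlgHom a ξ = (f.toPreGNS a : f.PreGNS) := fun a ↦ by
    simp [ξ]
  have hinner : ∀ a, ⟪ξ, f.gnsStarAlgHom a ξ⟫_ℂ = φ a := fun a ↦ by
    rw [hρ, UniformSpace.Completion.inner_coe, f.preGNS_inner_def]
    simp [hf]
  have hξ : ‖ξ‖ = 1 := by
    have h := hinner 1
    rw [map_one, one_apply_eq_self, hφ.1.2.1] at h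
    rw [← sq_eq_sq₀ (norm_nonneg _) zero_le_one, norm_sq_eq_re_inner (𝕜 := ℂ), h]
    simp
  refine ⟨f.GNS, inferInstance, inferInstance, inferInstance, f.gnsStarAlgHom,
    ⟨ξ, 0, fun h ↦ by simp [h] at hξ⟩, ?_⟩
  refine isIrreducibleRep_of_mem_extremePoints _ ξ ?_ hξ ?_
  · simp only [hρ]
    exact UniformSpace.Completion.denseRange_coe.comp f.toPreGNS.surjective.denseRange
      (UniformSpace.Completion.continuous_coe _)
  · convert hφ
    exact DFunLike.ext _ _ hinner

end StateSpace

/-- A star-closed family of operators on a nonzero Hilbert space generates a C⋆-algebra with a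
representation whose restriction to the family is irreducible. -/
theorem exists_starAlgHom_isIrreducibleRep_comp.{u} {H : Type u} [NormedAddCommGroup H]
    [InnerProductSpace ℂ H] [CompleteSpace H] [Nontrivial H] {ι : Type*}
    (u : ι → (H →L[ℂ] H)) (hu : ∀ i, ∃ j, star (u i) = u j) :
    ∃ (S : StarSubalgebra ℂ (H →L[ℂ] H)) (hS : ∀ i, u i ∈ S)
      (K : Type u) (_ : NormedAddCommGroup K) (_ : InnerProductSpace ℂ K) (_ : CompleteSpace K)
      (ρ : S →⋆ₐ[ℂ] (K →L[ℂ] K)), Nontrivial K ∧ IsIrreducibleRep fun i ↦ ρ ⟨u i, hS i⟩ := by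
  let S₀ := StarAlgebra.adjoin ℂ (Set.range u)
  let S := S₀.topologicalClosure
  have hclosed : IsClosed (S : Set (H →L[ℂ] H)) := S₀.isClosed_topologicalClosure
  have hS₀ : S₀ ≤ S := S₀.le_topologicalClosure
  obtain ⟨K, _, _, _, ρ, hK, hρ⟩ := exists_isIrreducibleRep_starAlgHom S.subtype
  have hS : ∀ i, u i ∈ S := fun i ↦ hS₀ (StarAlgebra.subset_adjoin ℂ _ ⟨i, rfl⟩)
  refine ⟨S, hS, K, _, _, _, ρ, hK, fun L hL hinv ↦ hρ L hL fun a v hv ↦ ?_⟩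
  have hmem : ∀ (b : H →L[ℂ] H) (hb : b ∈ S₀),
      (∀ v ∈ L, ρ ⟨b, hS₀ hb⟩ v ∈ L) ∧ ∀ v ∈ L, ρ (star ⟨b, hS₀ hb⟩) v ∈ L := by
    intro b hb
    induction hb using StarAlgebra.adjoin_induction with
    | mem x h =>
      obtain ⟨i, rfl⟩ := h
      obtain ⟨j, hj⟩ := hu i
      refine ⟨hinv i, ?_⟩
      have : (star ⟨u i, hS i⟩ : S) = ⟨u j, hS j⟩ := Subtype.ext hj
      rw [this]
      exact hinv j
    | algebraMap r =>
      have h : ∀ h, (⟨algebraMap ℂ _ r, h⟩ : S) = algebraMap ℂ S r := fun _ ↦ rfl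
      constructor
      · intro v hv
        rw [h, AlgHomClass.commutes]
        exact L.smul_mem r hv
      · intro v hv
        rw [h, ← algebraMap_star_comm, AlgHomClass.commutes]
        exact L.smul_mem _ hv
    | add x y hx hy ihx ihy =>
      have h : ∀ h, (⟨x + y, h⟩ : S) = ⟨x, hS₀ hx⟩ + ⟨y, hS₀ hy⟩ := fun _ ↦ rfl
      refine ⟨fun v hv ↦ ?_, fun v hv ↦ ?_⟩
      · rw [h, map_add]
        exact L.add_mem (ihx.1 v hv) (ihy.1 v hv)
      · rw [h, star_add, map_add]
        exact L.add_mem (ihx.2 v hv) (ihy.2 v hv)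
    | mul x y hx hy ihx ihy =>
      have h : ∀ h, (⟨x * y, h⟩ : S) = ⟨x, hS₀ hx⟩ * ⟨y, hS₀ hy⟩ := fun _ ↦ rfl
      refine ⟨fun v hv ↦ ?_, fun v hv ↦ ?_⟩
      · rw [h, map_mul]
        exact ihx.1 _ (ihy.1 v hv)
      · rw [h, star_mul, map_mul]
        exact ihy.2 _ (ihx.2 v hv)
    | star x hx ih =>
      have h : ∀ h, (⟨star x, h⟩ : S) = star ⟨x, hS₀ hx⟩ := fun _ ↦ rfl
      refine ⟨fun v hv ↦ ?_, fun v hv ↦ ?_⟩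
      · rw [h]
        exact ih.2 v hv
      · rw [h, star_star]
        exact ih.1 v hv
  have hcont : Continuous ρ := AddMonoidHomClass.continuous_of_bound ρ 1 fun a ↦ by
    simpa using NonUnitalStarAlgHom.norm_apply_le ρ a
  have hcl : IsClosed {a : S | ρ a v ∈ L} :=
    hL.preimage ((ContinuousLinearMap.apply ℂ K v).continuous.comp hcont)
  have hsub : Set.range (StarSubalgebra.inclusion hS₀) ⊆ {a : S | ρ a v ∈ L} := by
    rintro _ ⟨b, rfl⟩
    exact (hmem b b.2).1 v hv
  refine closure_minimal hsub hcl ?_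
  rw [Topology.IsEmbedding.subtypeVal.closure_eq_preimage_closure_image]
  have himg : Subtype.val '' Set.range (StarSubalgebra.inclusion hS₀) = (S₀ : Set (H →L[ℂ] H)) := by
    rw [← Set.range_comp]
    exact Subtype.range_coe
  rw [himg]
  exact a.2

section ZetaRep
variable {H : Type*} [NormedAddCommGroup H] [InnerProductSpace ℂ H] [CompleteSpace H]
variable {G : Type*} [Group G] {ζ : G → G → Circle} {π : G → (H →L[ℂ] H)}

theorem IsZetaRep.star_apply (hπ : IsZetaRep ζ π) (hnorm : IsNormalised ζ) (x : G) :
    star (π x) = π x⁻¹ := by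
  have h : π x * π x⁻¹ = 1 := by
    rw [hπ.2.2, hnorm, mul_inv_cancel, hπ.2.1]
    simp
  calc star (π x) = star (π x) * (π x * π x⁻¹) := by rw [h, mul_one]
    _ = π x⁻¹ := by rw [← mul_assoc, Unitary.star_mul_self_of_mem (hπ.1 x), one_mul]

theorem IsZetaRep.conj_apply (hπ : IsZetaRep ζ π) (hnorm : IsNormalised ζ) (g x : G) :
    π g * π x * star (π g) = ((ζ g x * ζ (g * x) g⁻¹ : Circle) : ℂ) • π (g * x * g⁻¹) := by
  rw [hπ.star_apply hnorm, hπ.2.2, smul_mul_assoc, hπ.2.2, smul_smul, Circle.coe_mul]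

/-- Let `χ` be a `G`-invariant one-dimensional `ζ`-representation of a nontrivial finite normal
subgroup `F`. In an irreducible projectively faithful `ζ`-representation of `G`, the `χ`-isotypic
part for `F` vanishes. -/
theorem sum_inv_smul_eq_zero_of_pFaithful (hπ : IsZetaRep ζ π) (hnorm : IsNormalised ζ)
    (hirr : IsIrreducibleRep π) (hfaith : PFaithful π) (F : Finset G) (χ : G → Circle)
    (hmul : ∀ x ∈ F, ∀ y ∈ F, x * y ∈ F ∧ χ x * χ y = ζ x y * χ (x * y))
    (hconj : ∀ g, ∀ x ∈ F,
      g * x * g⁻¹ ∈ F ∧ ζ g x * ζ (g * x) g⁻¹ * χ (g * x * g⁻¹) = χ x)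
    (hF : ∃ x ∈ F, x ≠ 1) :
    ∑ x ∈ F, (((χ x)⁻¹ : Circle) : ℂ) • π x = 0 := by
  classical
  set p := ∑ x ∈ F, (((χ x)⁻¹ : Circle) : ℂ) • π x with hp
  have hcomm : ∀ g, π g * p = p * π g := fun g ↦ by
    rw [hp, Finset.mul_sum, Finset.sum_mul]
    refine Finset.sum_bij (fun x _ ↦ g * x * g⁻¹) (fun x hx ↦ (hconj g x hx).1) ?_ ?_ ?_
    · intro x _ y _ h
      simpa using h
    · intro x hx
      exact ⟨g⁻¹ * x * g, by simpa using (hconj g⁻¹ x hx).1, by group⟩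
    · intro x hx
      have h : π g * π x = (π g * π x * star (π g)) * π g := by
        rw [mul_assoc, Unitary.star_mul_self_of_mem (hπ.1 g), mul_one]
      rw [mul_smul_comm, h, hπ.conj_apply hnorm, smul_mul_assoc, smul_smul, smul_mul_assoc,
        ← Circle.coe_mul]
      have hχ : (χ x)⁻¹ * (ζ g x * ζ (g * x) g⁻¹) = (χ (g * x * g⁻¹))⁻¹ := by
        rw [← (hconj g x hx).2]
        group
      rw [hχ]
  have hleft : ∀ y ∈ F, π y * p = (χ y : ℂ) • p := fun y hy ↦ by
    have himg : F.image (y * ·) = F := by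
      refine Finset.eq_of_subset_of_card_le ?_ ?_
      · exact Finset.image_subset_iff.2 fun x hx ↦ (hmul y hy x hx).1
      · rw [Finset.card_image_of_injective _ (mul_right_injective y)]
    rw [hp, Finset.mul_sum]
    conv_rhs => rw [← himg, Finset.sum_image (mul_right_injective y).injOn, Finset.smul_sum]
    refine Finset.sum_congr rfl fun x hx ↦ ?_
    rw [mul_smul_comm, hπ.2.2, smul_smul, smul_smul, ← Circle.coe_mul, ← Circle.coe_mul]
    have hχ : (χ x)⁻¹ * ζ y x = χ y * (χ (y * x))⁻¹ := by
      rw [inv_mul_eq_iff_eq_mul, ← mul_assoc, eq_mul_inv_iff_mul_eq, ← (hmul y hy x hx).2,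
        mul_comm]
    rw [hχ]
  have hinv : ∀ g, ∀ v ∈ LinearMap.ker p.toLinearMap, π g v ∈ LinearMap.ker p.toLinearMap := by
    intro g v hv
    have hv : p v = 0 := hv
    change (p * π g) v = 0
    rw [← hcomm, mul_apply_eq_comp, hv, map_zero]
  rcases hirr _ (ContinuousLinearMap.isClosed_ker p) hinv with hker | hker
  · obtain ⟨y, hy, hy1⟩ := hF
    refine absurd (hfaith y ⟨χ y, ContinuousLinearMap.ext fun v ↦ ?_⟩) hy1
    refine LinearMap.ker_eq_bot.1 hker ?_
    change (p * π y) v = p ((χ y : ℂ) • v)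
    rw [← hcomm, hleft y hy, map_smul]
    rfl
  · ext v
    exact LinearMap.mem_ker.1 (hker ▸ Submodule.mem_top : v ∈ LinearMap.ker p.toLinearMap)

end ZetaRep

section Minisocle
variable {G : Type*} [Group G]

theorem minisocle_normal : (minisocle G).Normal := by
  refine ⟨fun x hx g ↦ ?_⟩
  have h : minisocle G ≤ (minisocle G).comap (MulAut.conj g).toMonoidHom := by
    refine iSup₂_le fun N hN y hy ↦ ?_
    exact (le_iSup₂ (f := fun (N : Subgroup G) (_ : IsFiniteFoot N) ↦ N) N hN)
      (hN.1.conj_mem y hy g)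
  exact h hx

/-- Every element of the minisocle lies in a finite normal subgroup. -/
theorem exists_finite_normal_of_mem_minisocle {x : G} (hx : x ∈ minisocle G) :
    ∃ M : Subgroup G, M.Normal ∧ Finite M ∧ x ∈ M := by
  let T : Subgroup G :=
    { carrier := {x | ∃ M : Subgroup G, M.Normal ∧ Finite M ∧ x ∈ M}
      one_mem' := ⟨⊥, inferInstance, inferInstance, one_mem _⟩
      inv_mem' := fun ⟨M, h₁, h₂, h₃⟩ ↦ ⟨M, h₁, h₂, inv_mem h₃⟩
      mul_mem' := by
        rintro a b ⟨M, hM, hMf, ha⟩ ⟨M', hM', hMf', hb⟩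
        refine ⟨M ⊔ M', inferInstance, ?_, mul_mem (le_sup_left (a := M) ha)
          (le_sup_right (b := M') hb)⟩
        have : ((M ⊔ M' : Subgroup G) : Set G).Finite := by
          rw [Subgroup.mul_normal]
          exact (Set.toFinite (M : Set G)).mul (Set.toFinite (M' : Set G))
        exact this }
  have h : minisocle G ≤ T := iSup₂_le fun N hN y hy ↦ ⟨N, hN.1, hN.2.2.2, hy⟩
  exact h hx

end Minisocle

/-- If a countable group Γ has an irreducible projectively faithful ζ-representation, then
the minisocle MS(Γ) has an irreducible Γ-P-faithful ζ-representation. -/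
theorem stmt_15 (Γ : Type) [Group Γ] [Countable Γ] (ζ : Γ → Γ → Circle)
    (hζ : IsMultiplier ζ) (hnorm : IsNormalised ζ)
    (hex : ∃ (H : Type) (_ : NormedAddCommGroup H) (_ : InnerProductSpace ℂ H)
        (_ : CompleteSpace H) (π : Γ → (H →L[ℂ] H)),
        IsZetaRep ζ π ∧ IsIrreducibleRep π ∧ PFaithful π) :
    ∃ (H : Type) (_ : NormedAddCommGroup H) (_ : InnerProductSpace ℂ H) (_ : CompleteSpace H)
      (σ : minisocle Γ → (H →L[ℂ] H)),
      IsZetaRepOn ζ (minisocle Γ) σ ∧ IsIrreducibleRep σ ∧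
        GammaPFaithful ζ (minisocle Γ) σ := by
  obtain ⟨H, _, _, _, π, hπ, hirr, hfaith⟩ := hex
  rcases subsingleton_or_nontrivial H with hH | hH
  · refine ⟨H, _, _, inferInstance, fun x ↦ π x, ⟨fun x ↦ hπ.1 x, hπ.2.1, fun x y ↦ hπ.2.2 x y⟩,
      fun K _ _ ↦ .inl (Subsingleton.elim _ _), fun x _ ↦ ?_⟩
    exact Subtype.ext (hfaith x ⟨1, Subsingleton.elim _ _⟩)
  obtain ⟨S, hS, K, _, _, _, ρ, hK, hρ⟩ :=
    exists_starAlgHom_isIrreducibleRep_comp (fun x : minisocle Γ ↦ π x)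
      fun x ↦ ⟨x⁻¹, hπ.star_apply hnorm x⟩
  refine ⟨K, _, _, inferInstance, fun x ↦ ρ ⟨π x, hS x⟩, ⟨fun x ↦ ?_, ?_, fun x y ↦ ?_⟩, hρ, ?_⟩
  · rw [Unitary.mem_iff, ← map_star, ← map_mul, ← map_mul, ← map_one ρ]
    exact ⟨congrArg ρ (Subtype.ext (Unitary.star_mul_self_of_mem (hπ.1 x))),
      congrArg ρ (Subtype.ext (Unitary.mul_star_self_of_mem (hπ.1 x)))⟩
  · rw [← map_one ρ]
    exact congrArg ρ (Subtype.ext hπ.2.1)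
  · rw [← map_mul, ← map_smul]
    exact congrArg ρ (Subtype.ext (hπ.2.2 x y))
  rintro ⟨x, hx⟩ ⟨z, hz⟩
  by_contra hx1
  -- `V T z` says that `ρ` sends `T` to the scalar `z`
  let V : (H →L[ℂ] H) → ℂ → Prop := fun T z ↦ ∃ h : T ∈ S, ρ ⟨T, h⟩ = z • (1 : K →L[ℂ] K)
  have V_add : ∀ {T T' z z'}, V T z → V T' z' → V (T + T') (z + z') := by
    rintro T T' z z' ⟨h, e⟩ ⟨h', e'⟩
    exact ⟨add_mem h h', by rw [add_smul, ← e, ← e', ← map_add]; rfl⟩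
  have V_mul : ∀ {T T' z z'}, V T z → V T' z' → V (T * T') (z * z') := by
    rintro T T' z z' ⟨h, e⟩ ⟨h', e'⟩
    refine ⟨mul_mem h h', ?_⟩
    rw [mul_smul, ← e', ← one_mul (ρ ⟨T', h'⟩), ← smul_mul_assoc, ← e, ← map_mul]; rfl
  have V_smul : ∀ {T z} (c : ℂ), V T z → V (c • T) (c * z) := by
    rintro T z c ⟨h, e⟩
    exact ⟨S.smul_mem h c, by rw [mul_smul, ← e, ← map_smul]; rfl⟩
  have V_zero : ∀ {z}, V 0 z → z = 0 := by
    rintro z ⟨h, e⟩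
    have h0 : ρ ⟨0, h⟩ = 0 := map_zero ρ
    rw [h0] at e
    exact (smul_eq_zero.1 e.symm).resolve_right one_ne_zero
  have V_inj : ∀ {T z z'}, V T z → V T z' → z = z' := by
    rintro T z z' h h'
    have := V_add h (V_smul (-1) h')
    rw [neg_one_smul, add_neg_cancel] at this
    linear_combination V_zero this
  obtain ⟨M, hM, hMf, hxM⟩ := exists_finite_normal_of_mem_minisocle hx
  let F : Finset Γ := (Set.Finite.subset (Set.toFinite (M : Set Γ)) (fun y hy ↦ hy.1) :
    {y | y ∈ M ∧ ∃ z : Circle, ∀ g, V (π g * π y * star (π g)) z}.Finite).toFinset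
  have mem_F : ∀ y, y ∈ F ↔ y ∈ M ∧ ∃ z : Circle, ∀ g, V (π g * π y * star (π g)) z := by
    simp [F]
  have hxF : x ∈ F := by
    refine (mem_F x).2 ⟨hxM, z, fun g ↦ ?_⟩
    have hmem : g * x * g⁻¹ ∈ minisocle Γ := minisocle_normal.conj_mem x hx g
    have h := hz g
    simp only [conjRep, dif_pos hmem] at h
    rw [hπ.conj_apply hnorm]
    refine ⟨S.smul_mem (hS ⟨_, hmem⟩) _, ?_⟩
    rw [← h, ← map_smul, Circle.coe_mul]
    rfl
  choose! χ hχ using fun y (hy : y ∈ F) ↦ ((mem_F y).1 hy).2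
  have hχ1 : ∀ y ∈ F, V (π y) (χ y) := fun y hy ↦ by simpa [hπ.2.1] using hχ y hy 1
  have hmulV : ∀ y ∈ F, ∀ y' ∈ F, ∀ g, V (π g * π (y * y') * star (π g))
      (((ζ y y')⁻¹ * (χ y * χ y') : Circle) : ℂ) := fun y hy y' hy' g ↦ by
    have h := V_smul ((ζ y y')⁻¹ : Circle) (V_mul (hχ y hy g) (hχ y' hy' g))
    have e : (((ζ y y')⁻¹ : Circle) : ℂ) •
        (π g * π y * star (π g) * (π g * π y' * star (π g))) =
        π g * π (y * y') * star (π g) := by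
      have e' : π g * π y * star (π g) * (π g * π y' * star (π g)) =
          π g * (π y * ((star (π g) * π g) * π y')) * star (π g) := by simp only [mul_assoc]
      rw [e', Unitary.star_mul_self_of_mem (hπ.1 g), one_mul, hπ.2.2, mul_smul_comm,
        smul_mul_assoc, smul_smul, ← Circle.coe_mul, inv_mul_cancel, Circle.coe_one, one_smul]
    rw [e] at h
    simpa only [Circle.coe_mul] using h
  have hmulF : ∀ y ∈ F, ∀ y' ∈ F, y * y' ∈ F := fun y hy y' hy' ↦
    (mem_F _).2 ⟨mul_mem ((mem_F y).1 hy).1 ((mem_F y').1 hy').1, _, hmulV y hy y' hy'⟩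
  have hconjV : ∀ g, ∀ y ∈ F, ∀ g', V (π g' * π (g * y * g⁻¹) * star (π g'))
      (((ζ g y * ζ (g * y) g⁻¹)⁻¹ * χ y : Circle) : ℂ) := fun g y hy g' ↦ by
    have h := V_smul ((ζ g y * ζ (g * y) g⁻¹)⁻¹ : Circle) (hχ y hy (g' * g))
    have e₁ : π (g * y * g⁻¹) = (((ζ g y * ζ (g * y) g⁻¹)⁻¹ : Circle) : ℂ) •
        (π g * π y * star (π g)) := by
      rw [hπ.conj_apply hnorm, smul_smul, ← Circle.coe_mul, inv_mul_cancel, Circle.coe_one,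
        one_smul]
    have e₂ : π (g' * g) * π y * star (π (g' * g)) =
        π g' * (π g * π y * star (π g)) * star (π g') := by
      have e₃ : π (g' * g) = (((ζ g' g)⁻¹ : Circle) : ℂ) • (π g' * π g) := by
        rw [hπ.2.2, smul_smul, ← Circle.coe_mul, inv_mul_cancel, Circle.coe_one, one_smul]
      rw [e₃, star_smul, star_mul, smul_mul_assoc, smul_mul_assoc, mul_smul_comm, smul_smul,
        Complex.star_def, ← Circle.coe_inv_eq_conj, ← Circle.coe_mul, mul_inv_cancel,
        Circle.coe_one, one_smul]
      simp only [mul_assoc]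
    rw [e₁, mul_smul_comm, smul_mul_assoc, ← e₂, Circle.coe_mul]
    exact h
  have hconjF : ∀ g, ∀ y ∈ F, g * y * g⁻¹ ∈ F := fun g y hy ↦
    (mem_F _).2 ⟨hM.conj_mem y ((mem_F y).1 hy).1 g, _, hconjV g y hy⟩
  have hsum := sum_inv_smul_eq_zero_of_pFaithful hπ hnorm hirr hfaith F χ
    (fun y hy y' hy' ↦ ⟨hmulF y hy y' hy', by
      have h := V_inj (hχ _ (hmulF y hy y' hy') 1) (hmulV y hy y' hy' 1)
      rw [Circle.coe_inj.1 h, mul_inv_cancel_left]⟩)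
    (fun g y hy ↦ ⟨hconjF g y hy, by
      have h := V_inj (hχ _ (hconjF g y hy) 1) (hconjV g y hy 1)
      rw [Circle.coe_inj.1 h, mul_inv_cancel_left]⟩)
    ⟨x, hxF, fun h ↦ hx1 (Subtype.ext h)⟩
  have hcard : ∀ s ⊆ F, V (∑ y ∈ s, (((χ y)⁻¹ : Circle) : ℂ) • π y) s.card := by
    classical
    intro s
    induction s using Finset.induction_on with
    | empty => exact fun _ ↦ ⟨zero_mem S, by
        rw [Finset.card_empty, Nat.cast_zero, zero_smul]; exact map_zero ρ⟩
    | insert y s hy ih =>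
      intro hs
      have h := V_add (V_smul ((χ y)⁻¹ : Circle) (hχ1 y (hs (Finset.mem_insert_self y s))))
        (ih ((Finset.subset_insert y s).trans hs))
      rw [← Circle.coe_mul, inv_mul_cancel, Circle.coe_one, add_comm (1 : ℂ)] at h
      rw [Finset.sum_insert hy, Finset.card_insert_of_notMem hy]
      exact_mod_cast h
  have h := hcard F subset_rfl
  rw [hsum] at h
  have h0 := V_zero h
  rw [Nat.cast_eq_zero, Finset.card_eq_zero] at h0
  exact Finset.ne_empty_of_mem hxF h0
end

section
/- Let Γ be a countable group with Property (Fab) and ζ ∈ Z²(Γ,T) a normalised multiplier. If the minisocle MS(Γ) has an irreducible Γ-P-faithful ζ-representation (with respect to the restriction of ζ to MS(Γ) × MS(Γ)), then Γ has a ζ-representation which is both irreducible and projectively faithful. -/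
open scoped InnerProductSpace ComplexConjugate

section Kernels

variable {G : Type*} [Group G] {ζ : G → G → Circle}

/-- The kernel `(x, y) ↦ ζ(x⁻¹, y) φ(x⁻¹y)` attached to a function `φ` on the group. -/
noncomputable def zetaKernel (ζ : G → G → Circle) (φ : G → ℂ) (x y : G) : ℂ :=
  (ζ x⁻¹ y : ℂ) * φ (x⁻¹ * y)

/-- A complex kernel is positive if it is Hermitian and its quadratic form is nonnegative. -/
def IsPositiveKernel {X : Type*} (k : X → X → ℂ) : Prop :=
  (∀ x y, k y x = conj (k x y)) ∧
    ∀ c : X →₀ ℂ, 0 ≤ (c.sum fun x a => c.sum fun y b => conj a * b * k x y).re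

/-- The normalised `ζ`-positive-definite functions. -/
def zetaStates (ζ : G → G → Circle) : Set (G → ℂ) :=
  {φ | φ 1 = 1 ∧ IsPositiveKernel (zetaKernel ζ φ)}

/-- The cocycle identity behind the left invariance of the kernels `zetaKernel ζ φ`. -/
theorem IsMultiplier.translate (hζ : IsMultiplier ζ) (hn : IsNormalised ζ) (g x y : G) :
    ζ (g * x)⁻¹ (g * y) * ζ g y = ζ g x * ζ x⁻¹ y := by
  have h₁ := hζ.2.2 (g * x)⁻¹ g y
  have h₂ := hζ.2.2 (g * x)⁻¹ g x
  have h₃ := hn x⁻¹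
  have h₄ := hn (g * x)⁻¹
  rw [inv_inv] at h₃ h₄
  have h₅ : (g * x)⁻¹ * g = x⁻¹ := by group
  rw [h₅] at h₁ h₂
  rw [h₃, h₄, mul_one, one_mul] at h₂
  rw [← h₁, h₂]

theorem zetaKernel_translate (hζ : IsMultiplier ζ) (hn : IsNormalised ζ) (φ : G → ℂ)
    (g x y : G) :
    conj (ζ g x : ℂ) * (ζ g y : ℂ) * zetaKernel ζ φ (g * x) (g * y) = zetaKernel ζ φ x y := by
  have h : ((ζ (g * x)⁻¹ (g * y) : ℂ)) * ζ g y = ζ g x * ζ x⁻¹ y := by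
    exact_mod_cast congrArg (Subtype.val) (hζ.translate hn g x y)
  have h₂ : conj (ζ g x : ℂ) * ζ g x = 1 := by
    rw [mul_comm, Complex.mul_conj]; simp
  have h₃ : (g * x)⁻¹ * (g * y) = x⁻¹ * y := by group
  unfold zetaKernel
  rw [h₃]
  linear_combination (conj (ζ g x : ℂ) * φ (x⁻¹ * y)) * h + ((ζ x⁻¹ y : ℂ) * φ (x⁻¹ * y)) * h₂

theorem inner_linearCombination_self {X H : Type*} [NormedAddCommGroup H]
    [InnerProductSpace ℂ H] (e : X → H) (c : X →₀ ℂ) :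
    ⟪Finsupp.linearCombination ℂ e c, Finsupp.linearCombination ℂ e c⟫_ℂ =
      c.sum fun x a => c.sum fun y b => conj a * b * ⟪e x, e y⟫_ℂ := by
  rw [Finsupp.linearCombination_apply, Finsupp.sum, sum_inner]
  refine Finset.sum_congr rfl fun x _ => ?_
  rw [inner_sum]
  refine Finset.sum_congr rfl fun y _ => ?_
  rw [inner_smul_left, inner_smul_right, ← mul_assoc]

theorem isPositiveKernel_gram {X H : Type*} [NormedAddCommGroup H] [InnerProductSpace ℂ H]
    (e : X → H) : IsPositiveKernel fun x y => ⟪e x, e y⟫_ℂ := by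
  refine ⟨fun x y => (inner_conj_symm _ _).symm, fun c => ?_⟩
  rw [← inner_linearCombination_self]
  exact inner_self_nonneg (𝕜 := ℂ)

theorem norm_sq_linearCombination {X H : Type*} [NormedAddCommGroup H] [InnerProductSpace ℂ H]
    (e : X → H) (c : X →₀ ℂ) :
    ‖Finsupp.linearCombination ℂ e c‖ ^ 2 =
      (c.sum fun x a => c.sum fun y b => conj a * b * ⟪e x, e y⟫_ℂ).re := by
  rw [← inner_self_eq_norm_sq (𝕜 := ℂ), inner_linearCombination_self]
  rfl

/-- Kolmogorov decomposition: a positive kernel is a Gram kernel. -/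
theorem IsPositiveKernel.exists_gram {X : Type} {k : X → X → ℂ} (hk : IsPositiveKernel k) :
    ∃ (H : Type) (_ : NormedAddCommGroup H) (_ : InnerProductSpace ℂ H) (_ : CompleteSpace H)
      (e : X → H), (∀ x y, ⟪e x, e y⟫_ℂ = k x y) ∧
        Dense (Submodule.span ℂ (Set.range e) : Set H) := by
  let K : Matrix X X (ℂ →L[ℂ] ℂ) := fun x y => k x y • (1 : ℂ →L[ℂ] ℂ)
  have hK : K.PosSemidef := by
    have htfae := (RKHS.posSemidef_tfae (K := K)).out 0 2
    refine htfae.2 ⟨?_, fun c => ?_⟩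
    · refine Matrix.IsHermitian.ext fun x y => ?_
      simp only [K, star_smul, star_one, hk.1 x y]
      simp
    · have h : (c.sum fun x w => c.sum fun x' w' => ⟪(K x' x) w, w'⟫_ℂ) =
          c.sum fun x a => c.sum fun y b => conj a * b * k x y := by
        refine Finset.sum_congr rfl fun x _ => Finset.sum_congr rfl fun y _ => ?_
        simp [K, hk.1 x y]
        ring
      rw [h]
      exact hk.2 c
  have : Fact K.PosSemidef := ⟨hK⟩
  refine ⟨RKHS.OfKernel K, inferInstance, inferInstance, inferInstance,
    fun x => RKHS.kerFun (RKHS.OfKernel K) x 1, fun x y => ?_, ?_⟩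
  · rw [RKHS.kerFun_inner, RKHS.kerFun_apply, RKHS.OfKernel.kernel_ofKernel]
    simp [K]
  · have h := RKHS.kerFun_dense (RKHS.OfKernel K)
    rw [← Submodule.dense_iff_topologicalClosure_eq_top] at h
    refine h.mono (Submodule.span_le.2 ?_)
    rintro _ ⟨x, v, rfl⟩
    have : v = v • (1 : ℂ) := by simp
    rw [this, map_smul]
    exact Submodule.smul_mem _ _ (Submodule.subset_span ⟨x, rfl⟩)

/-- A family dominated by a total family is the image of that family under a bounded operator. -/
theorem exists_clm_of_norm_le {X H H' : Type*} [NormedAddCommGroup H] [InnerProductSpace ℂ H]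
    [NormedAddCommGroup H'] [InnerProductSpace ℂ H'] [CompleteSpace H'] {e : X → H} {e' : X → H'}
    (he : Dense (Submodule.span ℂ (Set.range e) : Set H)) (C : ℝ)
    (hC : ∀ c : X →₀ ℂ, ‖Finsupp.linearCombination ℂ e' c‖ ≤
      C * ‖Finsupp.linearCombination ℂ e c‖) :
    ∃ S : H →L[ℂ] H', ∀ x, S (e x) = e' x := by
  have hd : DenseRange (Finsupp.linearCombination ℂ e) := by
    rw [← Finsupp.range_linearCombination] at he
    rwa [DenseRange, ← LinearMap.coe_range]
  refine ⟨(Finsupp.linearCombination ℂ e').extendOfNorm (Finsupp.linearCombination ℂ e),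
    fun x => ?_⟩
  simpa using LinearMap.extendOfNorm_eq hd ⟨C, hC⟩ (Finsupp.single x 1)

theorem clm_ext_of_dense {X H H' : Type*} [NormedAddCommGroup H] [InnerProductSpace ℂ H]
    [NormedAddCommGroup H'] [InnerProductSpace ℂ H'] {e : X → H}
    (he : Dense (Submodule.span ℂ (Set.range e) : Set H)) {S T : H →L[ℂ] H'}
    (h : ∀ x, S (e x) = T (e x)) : S = T :=
  ContinuousLinearMap.ext_on he (by rintro _ ⟨x, rfl⟩; exact h x)

theorem eq_zero_of_dense {X H : Type*} [NormedAddCommGroup H] [InnerProductSpace ℂ H]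
    {e : X → H} (he : Dense (Submodule.span ℂ (Set.range e) : Set H)) {w : H}
    (h : ∀ x, ⟪e x, w⟫_ℂ = 0) : w = 0 := by
  have h₀ : innerSL ℂ w = 0 := clm_ext_of_dense he fun x => by
    rw [innerSL_apply_apply, ← inner_conj_symm, h x]; simp
  have := congrArg (fun f => f w) h₀
  simpa using this

end Kernels

section Representations

variable {G : Type*} [Group G] {ζ : G → G → Circle}
variable {H : Type*} [NormedAddCommGroup H] [InnerProductSpace ℂ H] [CompleteSpace H]
  {π : G → (H →L[ℂ] H)}

theorem IsZetaRep.inv_mul_self (hn : IsNormalised ζ) (hπ : IsZetaRep ζ π) (x : G) :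
    π x⁻¹ * π x = 1 := by
  have h := hn x⁻¹
  rw [inv_inv] at h
  rw [hπ.2.2, inv_mul_cancel, hπ.2.1, h]
  simp

theorem IsZetaRep.star_eq (hn : IsNormalised ζ) (hπ : IsZetaRep ζ π) (x : G) :
    star (π x) = π x⁻¹ := by
  have h₁ := hπ.inv_mul_self hn x
  have h₂ : π x * star (π x) = 1 := Unitary.mul_star_self_of_mem (hπ.1 x)
  calc star (π x) = π x⁻¹ * π x * star (π x) := by rw [h₁, one_mul]
    _ = π x⁻¹ := by rw [mul_assoc, h₂, mul_one]

theorem IsZetaRep.inner_left (hn : IsNormalised ζ) (hπ : IsZetaRep ζ π) (x : G) (v w : H) :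
    ⟪π x v, w⟫_ℂ = ⟪v, π x⁻¹ w⟫_ℂ := by
  rw [← hπ.star_eq hn, ContinuousLinearMap.star_eq_adjoint,
    ContinuousLinearMap.adjoint_inner_right]

theorem IsZetaRep.apply_apply (hπ : IsZetaRep ζ π) (x y : G) (v : H) :
    π x (π y v) = (ζ x y : ℂ) • π (x * y) v := by
  have := congrArg (fun T : H →L[ℂ] H => T v) (hπ.2.2 x y)
  simpa using this

theorem IsZetaRep.inner_eq_zetaKernel (hn : IsNormalised ζ) (hπ : IsZetaRep ζ π) (v : H)
    (x y : G) : ⟪π x v, π y v⟫_ℂ = zetaKernel ζ (fun z => ⟪v, π z v⟫_ℂ) x y := by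
  rw [hπ.inner_left hn, hπ.apply_apply, inner_smul_right, zetaKernel]

theorem IsZetaRep.vectorState_mem (hn : IsNormalised ζ) (hπ : IsZetaRep ζ π) {v : H}
    (hv : ‖v‖ = 1) : (fun z => ⟪v, π z v⟫_ℂ) ∈ zetaStates ζ := by
  refine ⟨?_, ?_⟩
  · simp [hπ.2.1, inner_self_eq_norm_sq_to_K, hv]
  · have h := isPositiveKernel_gram fun x => π x v
    convert h using 3 with x y
    exact (hπ.inner_eq_zetaKernel hn v x y).symm

theorem IsZetaRep.dense_span (hπ : IsZetaRep ζ π) (hirr : IsIrreducibleRep π) {v : H}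
    (hv : v ≠ 0) : Dense (Submodule.span ℂ (Set.range fun x => π x v) : Set H) := by
  set K := (Submodule.span ℂ (Set.range fun x => π x v)) with hK
  have hinv : ∀ x, K ≤ K.comap (π x).toLinearMap := by
    intro x
    refine Submodule.span_le.2 ?_
    rintro _ ⟨y, rfl⟩
    change π x (π y v) ∈ K
    rw [hπ.apply_apply]
    exact K.smul_mem _ (Submodule.subset_span ⟨_, rfl⟩)
  have h := hirr K.topologicalClosure K.isClosed_topologicalClosure fun x u hu => by
    exact map_mem_closure (π x).continuous hu fun w hw => hinv x hw
  have hvK : v ∈ K := Submodule.subset_span ⟨1, by simp [hπ.2.1]⟩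
  rcases h with h | h
  · exact absurd ((Submodule.mem_bot ℂ).1 (h ▸ K.le_topologicalClosure hvK)) hv
  · exact Submodule.dense_iff_topologicalClosure_eq_top.2 h

end Representations

section Representations

variable {G : Type*} [Group G] {ζ : G → G → Circle}
variable {H : Type*} [NormedAddCommGroup H] [InnerProductSpace ℂ H] [CompleteSpace H]
  {π : G → (H →L[ℂ] H)}

/-- The GNS construction for `ζ`-positive-definite functions. -/
theorem exists_gns {G : Type} [Group G] {ζ : G → G → Circle} (hζ : IsMultiplier ζ)
    (hn : IsNormalised ζ) {φ : G → ℂ} (hφ : φ ∈ zetaStates ζ) :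
    ∃ (H : Type) (_ : NormedAddCommGroup H) (_ : InnerProductSpace ℂ H) (_ : CompleteSpace H)
      (π : G → (H →L[ℂ] H)) (v : H), IsZetaRep ζ π ∧ ‖v‖ = 1 ∧ (∀ x, ⟪v, π x v⟫_ℂ = φ x) ∧
        Dense (Submodule.span ℂ (Set.range fun x => π x v) : Set H) := by
  obtain ⟨H, _, _, _, e, he, hd⟩ := hφ.2.exists_gram
  have hgram : ∀ g x y, ⟪(ζ g x : ℂ) • e (g * x), (ζ g y : ℂ) • e (g * y)⟫_ℂ = ⟪e x, e y⟫_ℂ := by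
    intro g x y
    rw [inner_smul_left, inner_smul_right, he, he, ← mul_assoc, zetaKernel_translate hζ hn]
  have hS : ∀ g, ∃ S : H →L[ℂ] H, ∀ x, S (e x) = (ζ g x : ℂ) • e (g * x) := by
    intro g
    refine exists_clm_of_norm_le hd 1 fun c => ?_
    rw [one_mul]
    refine le_of_eq ((sq_eq_sq₀ (norm_nonneg _) (norm_nonneg _)).1 ?_)
    simp only [norm_sq_linearCombination, hgram]
  choose S hS using hS
  have hone : S 1 = 1 := clm_ext_of_dense hd fun x => by simp [hS, hζ.1]
  have hmul : ∀ x y, S x * S y = (ζ x y : ℂ) • S (x * y) := fun x y =>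
    clm_ext_of_dense hd fun z => by
      have h : (ζ x y : ℂ) * ζ (x * y) z = ζ x (y * z) * ζ y z := by
        exact_mod_cast congrArg Subtype.val (hζ.2.2 x y z)
      simp only [mul_apply_eq_comp, hS, map_smul, smul_smul,
        smul_apply, mul_assoc, h]
      rw [mul_comm (ζ x (y * z) : ℂ)]
  have hinv : ∀ x, S x * S x⁻¹ = 1 := fun x => by
    rw [hmul, hn, mul_inv_cancel, hone]; simp
  have hstar : ∀ x, star (S x) * S x = 1 := by
    intro g
    refine clm_ext_of_dense hd fun y => ?_
    rw [← sub_eq_zero]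
    refine eq_zero_of_dense hd fun x => ?_
    rw [inner_sub_right, mul_apply_eq_comp, ContinuousLinearMap.star_eq_adjoint,
      ContinuousLinearMap.adjoint_inner_right, hS, hS, hgram, one_apply_eq_self,
      sub_self]
  have hv : ∀ x, S x (e 1) = e x := fun x => by simp [hS, hζ.2.1]
  refine ⟨H, inferInstance, inferInstance, inferInstance, S, e 1, ⟨fun x => ?_, hone, hmul⟩, ?_, fun x => ?_, ?_⟩
  · have : star (S x) = S x⁻¹ := by
      calc star (S x) = star (S x) * (S x * S x⁻¹) := by rw [hinv, mul_one]
        _ = S x⁻¹ := by rw [← mul_assoc, hstar, one_mul]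
    exact Unitary.mem_iff.2 ⟨hstar x, this ▸ hinv x⟩
  · have h : ‖e 1‖ ^ 2 = 1 := by
      rw [← inner_self_eq_norm_sq (𝕜 := ℂ), he]
      simp [zetaKernel, hζ.1, hφ.1]
    exact (pow_eq_one_iff_of_nonneg (norm_nonneg _) two_ne_zero).1 h
  · rw [hv, he]
    simp [zetaKernel, hζ.1]
  · simpa only [hv] using hd

/-- Schur's lemma for a self-adjoint operator commuting with an irreducible family. -/
theorem IsIrreducibleRep.exists_eq_smul_one {X : Type*} {π : X → (H →L[ℂ] H)}
    (hirr : IsIrreducibleRep π) [Nontrivial H] {T : H →L[ℂ] H} (hT : IsSelfAdjoint T)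
    (hc : ∀ x, Commute T (π x)) : ∃ r : ℝ, T = r • (1 : H →L[ℂ] H) := by
  have hcfc : ∀ f g : ℝ → ℝ, Continuous f → Continuous g → (∀ t, f t * g t = 0) →
      (∀ t ∈ spectrum ℝ T, f t = 0) ∨ ∀ t ∈ spectrum ℝ T, g t = 0 := by
    intro f g hf hg hfg
    have hzero : ∀ f : ℝ → ℝ, Continuous f → cfc f T = 0 → ∀ t ∈ spectrum ℝ T, f t = 0 := by
      intro f hf h t ht
      have h₁ := cfc_map_spectrum f T hT hf.continuousOn
      rw [h, spectrum.zero_eq] at h₁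
      have : f t ∈ f '' spectrum ℝ T := ⟨t, ht, rfl⟩
      rw [← h₁] at this
      simpa using this
    have hprod : cfc f T * cfc g T = 0 := by
      rw [← cfc_mul f g T hf.continuousOn hg.continuousOn]
      simp [hfg]
    rcases hirr (cfc f T).ker (cfc f T).isClosed_ker (fun x v hv => by
      have h := (IsSelfAdjoint.commute_cfc hT (hc x) f).eq
      have h' := congrArg (fun S : H →L[ℂ] H => S v) h
      simp only [mul_apply_eq_comp] at h'
      rw [LinearMap.mem_ker] at hv ⊢
      change cfc f T v = 0 at hv
      change cfc f T (π x v) = 0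
      rw [h', hv, map_zero]) with h | h
    · right
      refine hzero g hg ?_
      ext v
      have : cfc g T v ∈ (cfc f T).ker := by
        have := congrArg (fun S : H →L[ℂ] H => S v) hprod
        simpa using this
      rw [h] at this
      simpa using this
    · left
      refine hzero f hf ?_
      ext v
      have : v ∈ (cfc f T).ker := h ▸ Submodule.mem_top
      simpa using this
  obtain ⟨r, hr⟩ := ContinuousFunctionalCalculus.spectrum_nonempty (R := ℝ) T hT
  refine ⟨r, ?_⟩
  have hsub : ∀ s ∈ spectrum ℝ T, s = r := by
    intro s hs
    by_contra hne
    rcases hcfc (fun t => max (t - (r + s) / 2) 0) (fun t => max ((r + s) / 2 - t) 0)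
      (by fun_prop) (by fun_prop) (fun t => by
        rcases le_total t ((r + s) / 2) with h | h
        · rw [max_eq_right (by linarith : t - (r + s) / 2 ≤ 0), zero_mul]
        · rw [max_eq_right (by linarith : (r + s) / 2 - t ≤ 0), mul_zero]) with h | h
    all_goals
      have h₁ := h r hr
      have h₂ := h s hs
      simp only [max_eq_right_iff] at h₁ h₂
      exact hne (by linarith)
  calc T = cfc (id : ℝ → ℝ) T := (cfc_id ℝ T).symm
    _ = cfc (fun _ => r) T := cfc_congr fun s hs => hsub s hs
    _ = r • 1 := by rw [cfc_const r T, Algebra.algebraMap_eq_smul_one]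

/-- Vector states of irreducible `ζ`-representations are pure. -/
theorem IsZetaRep.eq_of_convex_combination {G : Type} [Group G] {ζ : G → G → Circle}
    {π : G → (H →L[ℂ] H)} (hζ : IsMultiplier ζ) (hn : IsNormalised ζ) (hπ : IsZetaRep ζ π)
    (hirr : IsIrreducibleRep π) {v : H} (hv : ‖v‖ = 1) {ψ₁ ψ₂ : G → ℂ}
    (h₁ : ψ₁ ∈ zetaStates ζ) (h₂ : ψ₂ ∈ zetaStates ζ) {a b : ℝ} (ha : 0 < a) (hb : 0 < b)
    (h : ∀ x, ⟪v, π x v⟫_ℂ = a * ψ₁ x + b * ψ₂ x) (x : G) : ψ₁ x = ⟪v, π x v⟫_ℂ := by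
  have hv0 : v ≠ 0 := by rintro rfl; simp at hv
  have : Nontrivial H := ⟨v, 0, hv0⟩
  have hd := hπ.dense_span hirr hv0
  obtain ⟨H₁, _, _, _, π₁, v₁, hπ₁, hv₁, hψ₁, -⟩ := exists_gns hζ hn h₁
  have hk : ∀ x y, ⟪π x v, π y v⟫_ℂ = a * ⟪π₁ x v₁, π₁ y v₁⟫_ℂ + b * zetaKernel ζ ψ₂ x y := by
    intro x y
    rw [hπ.inner_eq_zetaKernel hn, hπ₁.inner_eq_zetaKernel hn]
    simp only [zetaKernel, h, hψ₁]
    ring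
  obtain ⟨S, hS⟩ : ∃ S : H →L[ℂ] H₁, ∀ x, S (π x v) = π₁ x v₁ := by
    refine exists_clm_of_norm_le hd (√a)⁻¹ fun c => ?_
    have hsq : a * ‖Finsupp.linearCombination ℂ (fun x => π₁ x v₁) c‖ ^ 2 ≤
        ‖Finsupp.linearCombination ℂ (fun x => π x v) c‖ ^ 2 := by
      have hc := h₂.2.2 c
      have : (c.sum fun x s => c.sum fun y t => conj s * t * ⟪π x v, π y v⟫_ℂ) =
          a * (c.sum fun x s => c.sum fun y t => conj s * t * ⟪π₁ x v₁, π₁ y v₁⟫_ℂ) +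
          b * (c.sum fun x s => c.sum fun y t => conj s * t * zetaKernel ζ ψ₂ x y) := by
        simp only [Finsupp.sum, Finset.mul_sum, ← Finset.sum_add_distrib, hk]
        refine Finset.sum_congr rfl fun x _ => Finset.sum_congr rfl fun y _ => ?_
        ring
      rw [norm_sq_linearCombination, norm_sq_linearCombination, this]
      simp only [Complex.add_re, Complex.re_ofReal_mul]
      nlinarith
    rw [inv_mul_eq_div, le_div_iff₀ (Real.sqrt_pos.2 ha)]
    refine (sq_le_sq₀ (by positivity) (norm_nonneg _)).1 ?_
    rw [mul_pow, Real.sq_sqrt ha.le]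
    linarith
  have hint : ∀ x, S ∘L π x = π₁ x ∘L S := fun x => clm_ext_of_dense hd fun y => by
    simp only [ContinuousLinearMap.comp_apply, hπ.apply_apply, map_smul, hS, hπ₁.apply_apply]
  have hint' : ∀ x, S.adjoint ∘L π₁ x = π x ∘L S.adjoint := fun x => by
    have := congrArg ContinuousLinearMap.adjoint (hint x⁻¹)
    rw [ContinuousLinearMap.adjoint_comp, ContinuousLinearMap.adjoint_comp,
      ← ContinuousLinearMap.star_eq_adjoint, ← ContinuousLinearMap.star_eq_adjoint,
      hπ.star_eq hn, hπ₁.star_eq hn, inv_inv] at this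
    exact this.symm
  obtain ⟨r, hr⟩ := hirr.exists_eq_smul_one (T := S.adjoint ∘L S)
    (by rw [IsSelfAdjoint, ContinuousLinearMap.star_eq_adjoint, ContinuousLinearMap.adjoint_comp,
          ContinuousLinearMap.adjoint_adjoint])
    (fun x => by
      change (S.adjoint ∘L S) ∘L π x = π x ∘L (S.adjoint ∘L S)
      rw [ContinuousLinearMap.comp_assoc, hint, ← ContinuousLinearMap.comp_assoc, hint',
        ContinuousLinearMap.comp_assoc])
  have hSv : S v = v₁ := by simpa [hπ.2.1, hπ₁.2.1] using hS 1
  have hψ : ∀ x, ψ₁ x = r * ⟪v, π x v⟫_ℂ := by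
    intro x
    have : (S.adjoint ∘L S) (π x v) = (r : ℂ) • π x v := by rw [hr]; simp
    rw [← inner_smul_right, ← this, ContinuousLinearMap.comp_apply,
      ContinuousLinearMap.adjoint_inner_right, hS, hSv, hψ₁]
  have hr1 : (r : ℂ) = 1 := by
    have h := hψ 1
    rw [h₁.1, hπ.2.1] at h
    simpa [inner_self_eq_norm_sq_to_K, hv] using h.symm
  rw [hψ, hr1, one_mul]

theorem IsZetaRep.mem_orthogonal (hn : IsNormalised ζ) (hπ : IsZetaRep ζ π) {K : Submodule ℂ H}
    (hK : ∀ x, ∀ v ∈ K, π x v ∈ K) (x : G) {w : H} (hw : w ∈ Kᗮ) : π x w ∈ Kᗮ := by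
  intro u hu
  have := hw _ (hK x⁻¹ u hu)
  rwa [hπ.inner_left hn, inv_inv] at this

/-- A cyclic `ζ`-representation whose cyclic vector state is extreme is irreducible. -/
theorem IsZetaRep.irreducible_of_extreme (hn : IsNormalised ζ) (hπ : IsZetaRep ζ π) {v : H}
    (hv : ‖v‖ = 1) (hd : Dense (Submodule.span ℂ (Set.range fun x => π x v) : Set H))
    (hex : (fun x => ⟪v, π x v⟫_ℂ) ∈ (zetaStates ζ).extremePoints ℝ) : IsIrreducibleRep π := by
  intro K hcl hK
  have : CompleteSpace K := hcl.completeSpace_coe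
  obtain ⟨w, hw, w', hw', hvw⟩ := K.exists_add_mem_mem_orthogonal v
  have hww' : ⟪w, w'⟫_ℂ = 0 := hw' w hw
  have hcross : ∀ x, ⟪v, π x w⟫_ℂ = ⟪w, π x w⟫_ℂ := fun x => by
    rw [hvw, inner_add_left, ← inner_conj_symm w', hw' _ (hK x w hw)]; simp
  have hcross' : ∀ x, ⟪v, π x w'⟫_ℂ = ⟪w', π x w'⟫_ℂ := fun x => by
    rw [hvw, inner_add_left, hπ.mem_orthogonal hn hK x hw' w hw, zero_add]
  have hsum : ∀ x, ⟪v, π x v⟫_ℂ = ⟪w, π x w⟫_ℂ + ⟪w', π x w'⟫_ℂ := fun x => by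
    rw [← hcross, ← hcross', ← inner_add_right, ← map_add, ← hvw]
  by_cases hw0 : w = 0
  · left
    rw [hw0, zero_add] at hvw
    refine (Submodule.eq_bot_iff _).2 fun u hu => eq_zero_of_dense hd fun x => ?_
    rw [← inner_conj_symm, hπ.mem_orthogonal hn hK x (hvw ▸ hw') u hu, map_zero]
  right
  have hvK : v ∈ K := by
    by_cases hw0' : w' = 0
    · rwa [hvw, hw0', add_zero]
    have hnorm : ‖w‖ ^ 2 + ‖w'‖ ^ 2 = 1 := by
      have h := hsum 1
      simp only [hπ.2.1, one_apply_eq_self, inner_self_eq_norm_sq_to_K, hv] at h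
      have h' : (1 : ℝ) ^ 2 = ‖w‖ ^ 2 + ‖w'‖ ^ 2 := by exact_mod_cast h
      linarith
    have hstate : ∀ u : H, u ≠ 0 →
        (fun x => ((‖u‖ ^ 2 : ℝ) : ℂ)⁻¹ * ⟪u, π x u⟫_ℂ) ∈ zetaStates ζ := by
      intro u hu
      have hu' : ‖u‖ ≠ 0 := norm_ne_zero_iff.2 hu
      have h1 : ‖((‖u‖⁻¹ : ℝ) : ℂ) • u‖ = 1 := by
        rw [norm_smul, Complex.norm_real, norm_inv, norm_norm, inv_mul_cancel₀ hu']
      convert hπ.vectorState_mem hn h1 using 2 with x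
      rw [map_smul, inner_smul_left, inner_smul_right, Complex.conj_ofReal]
      push_cast
      ring
    have hpos : 0 < ‖w‖ ^ 2 := by positivity
    have hpos' : 0 < ‖w'‖ ^ 2 := by positivity
    have heq := hex.2 (hstate w hw0) (hstate w' hw0')
      ⟨‖w‖ ^ 2, ‖w'‖ ^ 2, hpos, hpos', hnorm, by
        funext x
        have h₁ : ((‖w‖ ^ 2 : ℝ) : ℂ) ≠ 0 := by exact_mod_cast hpos.ne'
        have h₂ : ((‖w'‖ ^ 2 : ℝ) : ℂ) ≠ 0 := by exact_mod_cast hpos'.ne'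
        rw [Pi.add_apply, Pi.smul_apply, Pi.smul_apply, Complex.real_smul, Complex.real_smul,
          mul_inv_cancel_left₀ h₁, mul_inv_cancel_left₀ h₂, hsum]⟩
    have hne : ((‖w‖ ^ 2 : ℝ) : ℂ) ≠ 0 := by exact_mod_cast hpos.ne'
    have hwx : ∀ x, ⟪w, π x w⟫_ℂ = ((‖w‖ ^ 2 : ℝ) : ℂ) * ⟪v, π x v⟫_ℂ := fun x => by
      have := congrFun heq x
      rw [← this, mul_inv_cancel_left₀ hne]
    have hwv : w = ((‖w‖ ^ 2 : ℝ) : ℂ) • v := by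
      rw [← sub_eq_zero]
      refine eq_zero_of_dense hd fun x => ?_
      rw [inner_sub_right, inner_smul_right, hπ.inner_left hn, hπ.inner_left hn, hcross, hwx,
        sub_self]
    exact (K.smul_mem_iff hne).1 (hwv ▸ hw)
  have hle : Submodule.span ℂ (Set.range fun x => π x v) ≤ K :=
    Submodule.span_le.2 (by rintro _ ⟨x, rfl⟩; exact hK x v hvK)
  have := hd.mono hle
  rw [Submodule.dense_iff_topologicalClosure_eq_top] at this
  rwa [hcl.submodule_topologicalClosure_eq] at this

end Representations

section States

variable {Γ : Type} [Group Γ] {ζ : Γ → Γ → Circle}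

theorem IsPositiveKernel.sum_nonneg {X : Type} {k : X → X → ℂ} (hk : IsPositiveKernel k)
    {ι : Type*} (s : Finset ι) (x : ι → X) (c : ι → ℂ) :
    0 ≤ (∑ i ∈ s, ∑ j ∈ s, conj (c i) * c j * k (x i) (x j)).re := by
  obtain ⟨H, _, _, _, e, he, -⟩ := hk.exists_gram
  have h : (∑ i ∈ s, ∑ j ∈ s, conj (c i) * c j * k (x i) (x j)) =
      ⟪∑ i ∈ s, c i • e (x i), ∑ i ∈ s, c i • e (x i)⟫_ℂ := by
    rw [sum_inner]
    refine Finset.sum_congr rfl fun i _ => ?_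
    rw [inner_sum]
    refine Finset.sum_congr rfl fun j _ => ?_
    rw [inner_smul_left, inner_smul_right, he, mul_assoc]
  rw [h]
  exact inner_self_nonneg (𝕜 := ℂ)

theorem isMultiplier_restrict (hζ : IsMultiplier ζ) (N : Subgroup Γ) :
    IsMultiplier fun x y : N => ζ x y :=
  ⟨fun x => hζ.1 x, fun x => hζ.2.1 x, fun x y z => hζ.2.2 x y z⟩

theorem isNormalised_restrict (hn : IsNormalised ζ) (N : Subgroup Γ) :
    IsNormalised fun x y : N => ζ x y :=
  fun x => hn x

theorem restrict_mem_zetaStates (hζ : IsMultiplier ζ) (hn : IsNormalised ζ) (N : Subgroup Γ)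
    {φ : Γ → ℂ} (hφ : φ ∈ zetaStates ζ) :
    (fun x : N => φ x) ∈ zetaStates fun x y : N => ζ x y := by
  obtain ⟨H, _, _, _, π, v, hπ, hv, hφv, -⟩ := exists_gns hζ hn hφ
  have hres : IsZetaRep (fun x y : N => ζ x y) fun x : N => π x :=
    ⟨fun x => hπ.1 x, hπ.2.1, fun x y => hπ.2.2 x y⟩
  simpa only [hφv] using hres.vectorState_mem (isNormalised_restrict hn N) hv

theorem isCompact_zetaStates (hζ : IsMultiplier ζ) (hn : IsNormalised ζ) :
    IsCompact (zetaStates ζ) := by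
  have hcl : IsClosed (zetaStates ζ) := by
    simp only [zetaStates, IsPositiveKernel, Set.ofPred_and, Set.ofPred_forall]
    refine IsClosed.inter (isClosed_eq (by fun_prop) continuous_const)
      (IsClosed.inter (isClosed_iInter fun x => isClosed_iInter fun y => ?_)
        (isClosed_iInter fun c => ?_))
    · unfold zetaKernel
      exact isClosed_eq (by fun_prop) (Complex.continuous_conj.comp (by fun_prop))
    · unfold zetaKernel Finsupp.sum
      exact isClosed_le continuous_const (Complex.continuous_re.comp (by fun_prop))
  refine IsCompact.of_isClosed_subset
    (isCompact_univ_pi fun _ : Γ => isCompact_closedBall (0 : ℂ) 1) hcl fun φ hφ x _ => ?_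
  obtain ⟨H, _, _, _, π, v, hπ, hv, hφv, -⟩ := exists_gns hζ hn hφ
  rw [mem_closedBall_zero_iff, ← hφv]
  refine (norm_inner_le_norm _ _).trans ?_
  rw [hv, one_mul]
  have h : ‖π x v‖ = ‖v‖ :=
    ContinuousLinearMap.norm_map_of_mem_unitary (hπ.1 x) v
  rw [h, hv]

open scoped Classical in
/-- The extension by zero of a vector state of a subgroup; it is a vector state of the induced
representation. -/
theorem zeroExtend_mem_zetaStates (hζ : IsMultiplier ζ) (hn : IsNormalised ζ) (N : Subgroup Γ)
    {H : Type*} [NormedAddCommGroup H] [InnerProductSpace ℂ H] [CompleteSpace H]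
    {σ : N → (H →L[ℂ] H)} (hσ : IsZetaRep (fun x y : N => ζ x y) σ) {v : H} (hv : ‖v‖ = 1) :
    (fun x => if h : x ∈ N then ⟪v, σ ⟨x, h⟩ v⟫_ℂ else 0) ∈ zetaStates ζ := by
  set φ : Γ → ℂ := fun x => if h : x ∈ N then ⟪v, σ ⟨x, h⟩ v⟫_ℂ else 0 with hφ
  refine ⟨?_, ?_⟩
  · have h1 : σ ⟨1, N.one_mem⟩ = 1 := hσ.2.1
    simp [hφ, N.one_mem, h1, inner_self_eq_norm_sq_to_K, hv]
  let r : Γ → Γ := fun x => (QuotientGroup.mk (s := N) x).out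
  have hr : ∀ x, (r x)⁻¹ * x ∈ N := fun x =>
    QuotientGroup.eq.1 (QuotientGroup.out_eq' (QuotientGroup.mk (s := N) x))
  let e : Γ → lp (fun _ : Γ ⧸ N => H) 2 := fun x =>
    lp.single 2 (QuotientGroup.mk x) (conj (ζ (r x) ((r x)⁻¹ * x) : ℂ) • σ ⟨_, hr x⟩ v)
  convert isPositiveKernel_gram e using 3 with x y
  rw [lp.inner_single_left]
  by_cases hxy : (QuotientGroup.mk x : Γ ⧸ N) = QuotientGroup.mk y
  · have hrxy : r x = r y := by simp only [r, hxy]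
    have hkN : ∀ a b : N, ⟪σ a v, σ b v⟫_ℂ = zetaKernel ζ φ a b := by
      intro a b
      rw [hσ.inner_eq_zetaKernel (isNormalised_restrict hn N)]
      simp only [zetaKernel, hφ]
      rw [dif_pos (N.mul_mem (N.inv_mem a.2) b.2)]
      rfl
    have key := zetaKernel_translate hζ hn φ (r x) ((r x)⁻¹ * x) ((r x)⁻¹ * y)
    rw [mul_inv_cancel_left, mul_inv_cancel_left] at key
    simp only [e, hxy, lp.single_apply_self]
    rw [inner_smul_left, inner_smul_right, hkN, Complex.conj_conj]
    simp only
    rw [← hrxy, ← key]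
    have h₁ : ∀ z : Circle, (z : ℂ) * conj (z : ℂ) = 1 := fun z => by
      rw [Complex.mul_conj]; simp
    linear_combination (-(zetaKernel ζ φ x y)) * h₁ (ζ (r x) ((r x)⁻¹ * x)) -
      (zetaKernel ζ φ x y) * ((ζ (r x) ((r x)⁻¹ * x) : ℂ) * conj (ζ (r x) ((r x)⁻¹ * x) : ℂ)) *
        h₁ (ζ (r x) ((r x)⁻¹ * y))
  · have hne : x⁻¹ * y ∉ N := fun h => hxy (QuotientGroup.eq.2 h)
    simp only [e]
    rw [lp.single_apply_ne _ _ _ hxy, inner_zero_right]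
    simp [zetaKernel, hφ, hne]

end States

section Convexity

open scoped ENNReal

/-- In a compact set, one can find an extreme point avoiding countably many sets as soon as each
of them is separated from a fixed point by nonnegative functionals with arbitrarily small value
at that point. -/
theorem exists_extremePoint_forall_notMem {E I : Type*} [AddCommGroup E] [Module ℝ E]
    [TopologicalSpace E] [T2Space E] [IsTopologicalAddGroup E] [ContinuousSMul ℝ E]
    [LocallyConvexSpace ℝ E] [Countable I] {F : Set E} (hF : IsCompact F) {x₀ : E} (hx₀ : x₀ ∈ F)
    (P : I → Set E)
    (hP : ∀ i, ∀ ε > (0 : ℝ), ∃ h : E →L[ℝ] ℝ, (∀ x ∈ F, 0 ≤ h x) ∧ h x₀ < ε ∧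
      ∀ x ∈ P i, 1 ≤ h x) :
    ∃ x ∈ F.extremePoints ℝ, ∀ i, x ∉ P i := by
  obtain ⟨ε, hε, hsum⟩ := ENNReal.exists_pos_sum_of_countable one_ne_zero I
  choose h hnonneg hsmall hbig using fun i => hP i (ε i) (by exact_mod_cast hε i)
  let f : E → ℝ≥0∞ := fun x => ∑' i, ENNReal.ofReal (h i x)
  have hlsc : LowerSemicontinuous f := lowerSemicontinuous_tsum fun i =>
    (ENNReal.continuous_ofReal.comp (h i).continuous).lowerSemicontinuous
  have hf₀ : f x₀ < 1 := by
    refine lt_of_le_of_lt (ENNReal.tsum_le_tsum fun i => ?_) hsum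
    exact ENNReal.ofReal_le_of_le_toReal (by simpa using (hsmall i).le)
  obtain ⟨y, hy, hmin⟩ := (hlsc.lowerSemicontinuousOn F).exists_isMinOn ⟨x₀, hx₀⟩ hF
  rw [isMinOn_iff] at hmin
  have hfy : f y < 1 := (hmin x₀ hx₀).trans_lt hf₀
  let B : Set E := F ∩ f ⁻¹' Set.Iic (f y)
  have hB : IsCompact B :=
    hF.inter_right (lowerSemicontinuous_iff_isClosed_preimage.1 hlsc (f y))
  have hext : IsExtreme ℝ F B := by
    refine ⟨Set.inter_subset_left, ?_⟩
    rintro u hu w hw z ⟨-, hz⟩ ⟨a, b, ha, hb, hab, rfl⟩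
    refine ⟨hu, ?_⟩
    change f (a • u + b • w) ≤ f y at hz
    change f u ≤ f y
    have hsplit : f (a • u + b • w) = ENNReal.ofReal a * f u + ENNReal.ofReal b * f w := by
      simp only [f, ← ENNReal.tsum_mul_left, ← ENNReal.tsum_add]
      refine tsum_congr fun i => ?_
      rw [← ENNReal.ofReal_mul ha.le, ← ENNReal.ofReal_mul hb.le,
        ← ENNReal.ofReal_add (mul_nonneg ha.le (hnonneg i u hu))
          (mul_nonneg hb.le (hnonneg i w hw))]
      simp
    by_contra hlt
    rw [not_le] at hlt
    have h₁ : ENNReal.ofReal a * f y < ENNReal.ofReal a * f u :=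
      ENNReal.mul_lt_mul_right (by simpa using ha) ENNReal.ofReal_ne_top hlt
    have h₂ : ENNReal.ofReal b * f y ≤ ENNReal.ofReal b * f w := by
      gcongr
      exact hmin w hw
    have h₃ := ENNReal.add_lt_add_of_lt_of_le
      (ENNReal.mul_ne_top ENNReal.ofReal_ne_top (hfy.trans ENNReal.one_lt_top).ne) h₁ h₂
    rw [← add_mul, ← ENNReal.ofReal_add ha.le hb.le, hab, ENNReal.ofReal_one, one_mul,
      ← hsplit] at h₃
    exact absurd hz (not_le.2 h₃)
  obtain ⟨x, hx⟩ := hB.extremePoints_nonempty ⟨y, hy, le_refl (f y)⟩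
  refine ⟨x, hext.extremePoints_subset_extremePoints hx, fun i hi => ?_⟩
  have h₁ : f x ≤ f y := hx.1.2
  have h₂ : 1 ≤ f x := by
    refine le_trans ?_ (ENNReal.le_tsum i)
    simpa using hbig i x hi
  exact absurd (h₂.trans h₁) (not_le.2 hfy)

end Convexity

section Characters

/-- The one-dimensional `ω`-representations of a group. -/
def zetaCharacters {M : Type*} [Group M] (ω : M → M → Circle) : Set (M → Circle) :=
  {χ | ∀ a b, χ a * χ b = ω a b * χ (a * b)}

theorem finite_zetaCharacters {M : Type*} [Group M] [Finite (Abelianization M)]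
    (ω : M → M → Circle) : (zetaCharacters ω).Finite := by
  rcases (zetaCharacters ω).eq_empty_or_nonempty with h | ⟨χ₀, h₀⟩
  · rw [h]; exact Set.finite_empty
  have hfin : Finite (M →* Circle) := by
    refine Finite.of_injective
      (fun f : M →* Circle => Circle.toUnits.comp (Abelianization.lift f)) fun f g hfg => ?_
    ext x
    have := DFunLike.congr_fun hfg (Abelianization.of x)
    simpa using congrArg Units.val this
  let F : zetaCharacters ω → (M →* Circle) := fun χ => MonoidHom.mk' (fun a => χ.1 a / χ₀ a)
    fun a b => by
      have h := χ.2 a b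
      have h' := h₀ a b
      rw [div_mul_div_comm, h, h', mul_div_mul_left_eq_div]
  have : Finite (zetaCharacters ω) := Finite.of_injective F fun χ χ' h => by
    ext1
    funext a
    simpa [F] using DFunLike.congr_fun h a
  exact Set.toFinite _

end Characters

section ProjectiveKernel

variable {G : Type*} [Group G] {ζ : G → G → Circle}
variable {H : Type*} [NormedAddCommGroup H] [InnerProductSpace ℂ H] [CompleteSpace H]
  {π : G → (H →L[ℂ] H)}

theorem Circle.inv_smul_coe_smul {E : Type*} [AddCommGroup E] [Module ℂ E] (z : Circle) (v : E) :
    ((z⁻¹ : Circle) : ℂ) • (z : ℂ) • v = v := by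
  rw [smul_smul, ← Circle.coe_mul, inv_mul_cancel, Circle.coe_one, one_smul]

theorem IsZetaRep.eq_inv_smul (hπ : IsZetaRep ζ π) (x y : G) :
    π (x * y) = (((ζ x y)⁻¹ : Circle) : ℂ) • (π x * π y) := by
  rw [hπ.2.2, Circle.inv_smul_coe_smul]

theorem IsZetaRep.map_conj_eq_smul_one (hn : IsNormalised ζ) (hπ : IsZetaRep ζ π) {x : G}
    {z : Circle} (hx : π x = (z : ℂ) • (1 : H →L[ℂ] H)) (g : G) :
    π (g * x * g⁻¹) =
      (((ζ g x * ζ (g * x) g⁻¹)⁻¹ * z : Circle) : ℂ) • (1 : H →L[ℂ] H) := by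
  have h : π g * π g⁻¹ = 1 := by
    simpa [hπ.2.1, hn g] using hπ.2.2 g g⁻¹
  rw [hπ.eq_inv_smul, hπ.eq_inv_smul, hx, mul_smul_comm, mul_one, smul_mul_assoc, smul_mul_assoc,
    h, smul_smul, smul_smul, ← Circle.coe_mul, ← Circle.coe_mul, mul_inv, mul_comm (ζ g x)⁻¹,
    mul_assoc]

/-- The projective kernel of a `ζ`-representation, as a subgroup. -/
def IsZetaRep.projKer (hn : IsNormalised ζ) (hπ : IsZetaRep ζ π) : Subgroup G where
  carrier := ProjKer π
  one_mem' := ⟨1, by simp [hπ.2.1]⟩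
  mul_mem' := by
    rintro x y ⟨z, hz⟩ ⟨w, hw⟩
    refine ⟨(ζ x y)⁻¹ * z * w, ?_⟩
    rw [hπ.eq_inv_smul, hz, hw, smul_mul_assoc, one_mul, smul_smul, smul_smul, Circle.coe_mul,
      Circle.coe_mul, mul_assoc]
  inv_mem' := by
    rintro x ⟨z, hz⟩
    refine ⟨z⁻¹, ?_⟩
    have h := hπ.inv_mul_self hn x
    rw [hz, mul_smul_comm, mul_one] at h
    rw [← h, Circle.inv_smul_coe_smul]

theorem IsZetaRep.normal_projKer (hn : IsNormalised ζ) (hπ : IsZetaRep ζ π) :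
    (hπ.projKer hn).Normal :=
  ⟨fun _ ⟨_, hz⟩ g => ⟨_, hπ.map_conj_eq_smul_one hn hz g⟩⟩

theorem IsZetaRep.normalClosure_le_projKer (hn : IsNormalised ζ) (hπ : IsZetaRep ζ π) {x : G}
    (hx : x ∈ ProjKer π) : Subgroup.normalClosure {x} ≤ hπ.projKer hn :=
  have := hπ.normal_projKer hn
  Subgroup.normalClosure_le_normal (Set.singleton_subset_iff.2 hx)

/-- A cyclic representation of `N` is scalar at every point where some representation of the
whole group with the same coefficients on `N` is scalar. -/
theorem IsZetaRep.eq_smul_one_of_inner_eq (hn : IsNormalised ζ) (hπ : IsZetaRep ζ π)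
    {N : Subgroup G} {K : Type*} [NormedAddCommGroup K] [InnerProductSpace ℂ K] [CompleteSpace K]
    {σ : N → (K →L[ℂ] K)} (hσ : IsZetaRep (fun x y : N => ζ x y) σ) {v : H} {w : K}
    (hd : Dense (Submodule.span ℂ (Set.range fun x => σ x w) : Set K))
    (h : ∀ x : N, ⟪v, π x v⟫_ℂ = ⟪w, σ x w⟫_ℂ) {y : N} {z : ℂ}
    (hy : π y = z • (1 : H →L[ℂ] H)) : σ y = z • (1 : K →L[ℂ] K) := by
  have hn' : IsNormalised fun x y : N => ζ x y := fun x => hn x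
  have hker : ∀ a b : N, ⟪π a v, π b v⟫_ℂ = ⟪σ a w, σ b w⟫_ℂ := by
    intro a b
    rw [hπ.inner_eq_zetaKernel hn, hσ.inner_eq_zetaKernel hn']
    exact congrArg _ (h (a⁻¹ * b))
  refine clm_ext_of_dense hd fun b => sub_eq_zero.1 (eq_zero_of_dense hd fun a => ?_)
  have h₁ : ⟪σ a w, σ y (σ b w)⟫_ℂ = ⟪π a v, π y (π b v)⟫_ℂ := by
    rw [hσ.apply_apply, hπ.apply_apply, inner_smul_right, inner_smul_right, ← hker]
    rfl
  rw [inner_sub_right, h₁, hy]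
  simp [inner_smul_right, hker]

end ProjectiveKernel

section Minisocle

variable (Γ : Type*) [Group Γ]

theorem normal_minisocle : (minisocle Γ).Normal := by
  unfold minisocle
  have : ∀ N : Subgroup Γ, (⨆ _ : IsFiniteFoot N, N).Normal := fun N =>
    @Subgroup.iSup_normal _ _ _ (fun _ : IsFiniteFoot N => N) fun h => h.1
  exact Subgroup.iSup_normal _

variable {Γ}

theorem exists_isFiniteFoot_le {M : Subgroup Γ} (hM : M.Normal) (hbot : M ≠ ⊥) [Finite M] :
    ∃ L ≤ M, IsFiniteFoot L := by
  have hfin : {L : Subgroup Γ | L ≤ M ∧ L.Normal ∧ L ≠ ⊥}.Finite := by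
    have h : (M : Set Γ).Finite := Set.toFinite _
    exact Set.Finite.of_finite_image
      (h.finite_subsets.subset (by rintro _ ⟨L, hL, rfl⟩; exact hL.1))
      (f := fun L : Subgroup Γ => (L : Set Γ)) SetLike.coe_injective.injOn
  obtain ⟨L, hL, hmin⟩ := hfin.exists_minimal ⟨M, le_rfl, hM, hbot⟩
  refine ⟨L, hL.1, hL.2.1, hL.2.2, fun K hK hK' hKL => ?_, ?_⟩
  · exact le_antisymm hKL (hmin ⟨hKL.trans hL.1, hK, hK'⟩ hKL)
  · exact Finite.of_injective _ (Subgroup.inclusion_injective hL.1)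

theorem infinite_of_disjoint_minisocle {M : Subgroup Γ} (hM : M.Normal) (hbot : M ≠ ⊥)
    (h : ∀ y ∈ M, y ∈ minisocle Γ → y = 1) : Infinite M := by
  refine not_finite_iff_infinite.1 fun hfin => ?_
  obtain ⟨L, hLM, hL⟩ := exists_isFiniteFoot_le hM hbot
  have hle : L ≤ minisocle Γ := le_iSup₂_of_le L hL le_rfl
  exact hL.2.1 ((Subgroup.eq_bot_iff_forall L).2 fun y hy => h y (hLM hy) (hle hy))

end Minisocle

section Averaging

variable {Γ : Type} [Group Γ] {ζ : Γ → Γ → Circle}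

/-- The functional `φ ↦ re ∑ conj(c s) c(t) ζ(s⁻¹, t) φ(s⁻¹t)`. -/
noncomputable def zetaQuadratic (ζ : Γ → Γ → Circle) {M : Type*} (S : Finset M) (i : M → Γ)
    (c : M → ℂ) : (Γ → ℂ) →L[ℝ] ℝ where
  toFun φ := (∑ s ∈ S, ∑ t ∈ S, conj (c s) * c t * zetaKernel ζ φ (i s) (i t)).re
  map_add' φ ψ := by
    simp only [zetaKernel, Pi.add_apply, mul_add, Finset.sum_add_distrib, Complex.add_re]
  map_smul' r φ := by
    rw [RingHom.id_apply, smul_eq_mul, ← Complex.re_ofReal_mul, Finset.mul_sum]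
    congr 1
    refine Finset.sum_congr rfl fun s _ => ?_
    rw [Finset.mul_sum]
    refine Finset.sum_congr rfl fun t _ => ?_
    simp only [zetaKernel, Pi.smul_apply, Complex.real_smul]
    ring
  cont := by
    unfold zetaKernel
    exact Complex.continuous_re.comp (by fun_prop)

/-- A one-dimensional representation of an infinite subgroup `M` is separated from a state
vanishing on `M \ {1}` by a nonnegative functional. -/
theorem exists_separating_functional (hn : IsNormalised ζ) (M : Subgroup Γ) [Infinite M]
    {χ : M → Circle} (hχ : χ ∈ zetaCharacters fun x y : M => ζ x y) {φ₀ : Γ → ℂ}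
    (h₁ : φ₀ 1 = 1) (h₀ : ∀ x ∈ M, x ≠ 1 → φ₀ x = 0) {ε : ℝ} (hε : 0 < ε) :
    ∃ h : (Γ → ℂ) →L[ℝ] ℝ, (∀ φ ∈ zetaStates ζ, 0 ≤ h φ) ∧ h φ₀ < ε ∧
      ∀ φ : Γ → ℂ, (∀ x : M, φ x = χ x) → 1 ≤ h φ := by
  classical
  obtain ⟨n, hnε⟩ := exists_nat_one_div_lt hε
  obtain ⟨S, -, hS⟩ := Set.infinite_univ (α := M) |>.exists_subset_card_eq (n + 1)
  have hn0 : ((n : ℂ) + 1) ≠ 0 := by exact_mod_cast n.succ_ne_zero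
  have hχs : ∀ s : M, (χ s : ℂ) * conj (χ s : ℂ) = 1 := fun s => by
    rw [Complex.mul_conj]; simp
  let c : M → ℂ := fun s => conj (χ s : ℂ) / (n + 1)
  have hc : ∀ s, conj (c s) = (χ s : ℂ) / (n + 1) := fun s => by simp [c]
  refine ⟨zetaQuadratic ζ S (fun s => (s : Γ)) c, fun φ hφ => hφ.2.sum_nonneg S _ c, ?_, ?_⟩
  · change (∑ s ∈ S, ∑ t ∈ S, conj (c s) * c t * zetaKernel ζ φ₀ s t).re < ε
    have hterm : ∀ s ∈ S, ∑ t ∈ S, conj (c s) * c t * zetaKernel ζ φ₀ s t =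
        1 / ((n : ℂ) + 1) ^ 2 := by
      intro s hs
      rw [Finset.sum_eq_single_of_mem s hs]
      · have h : ζ (s : Γ)⁻¹ s = 1 := by simpa using hn (s : Γ)⁻¹
        simp only [zetaKernel, h, inv_mul_cancel, h₁, hc, Circle.coe_one, mul_one, c]
        rw [div_mul_div_comm, hχs, sq]
      · intro t _ hts
        rw [zetaKernel, h₀ _ (M.mul_mem (M.inv_mem s.2) t.2) fun h => hts ?_]
        · simp
        · exact Subtype.ext (inv_mul_eq_one.1 h).symm
    rw [Finset.sum_congr rfl hterm, Finset.sum_const, hS]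
    have : (n + 1) • (1 / ((n : ℂ) + 1) ^ 2) = ((1 / ((n : ℝ) + 1) : ℝ) : ℂ) := by
      rw [nsmul_eq_mul]
      push_cast
      field_simp
    rwa [this, Complex.ofReal_re]
  · intro φ hφ
    change 1 ≤ (∑ s ∈ S, ∑ t ∈ S, conj (c s) * c t * zetaKernel ζ φ s t).re
    have hone : χ 1 = 1 := by
      have h := hχ 1 1
      have h' : ζ 1 1 = 1 := by simpa using hn 1
      simpa [h'] using h
    have hinv : ∀ s : M, χ s⁻¹ = (χ s)⁻¹ := fun s => by
      have h := hχ s s⁻¹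
      have h' : ζ (s : Γ) (s : Γ)⁻¹ = 1 := hn s
      rw [mul_inv_cancel, hone] at h
      simp only [InvMemClass.coe_inv, h', mul_one] at h
      exact eq_inv_of_mul_eq_one_right h
    have hterm : ∀ s ∈ S, ∀ t ∈ S, conj (c s) * c t * zetaKernel ζ φ s t =
        1 / ((n : ℂ) + 1) ^ 2 := by
      intro s _ t _
      have hk : zetaKernel ζ φ s t = conj (χ s : ℂ) * χ t := by
        have h := congrArg (fun z : Circle => (z : ℂ)) (hχ s⁻¹ t)
        simp only [Circle.coe_mul, hinv, Circle.coe_inv_eq_conj] at h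
        rw [h, zetaKernel]
        exact congrArg _ (hφ (s⁻¹ * t))
      rw [hk, hc]
      simp only [c]
      field_simp
      linear_combination (χ t * conj (χ t : ℂ)) * hχs s + hχs t
    rw [Finset.sum_congr rfl fun s hs => Finset.sum_congr rfl (hterm s hs)]
    simp only [Finset.sum_const, hS, nsmul_eq_mul]
    have : ((n + 1 : ℕ) : ℂ) * (((n + 1 : ℕ) : ℂ) * (1 / ((n : ℂ) + 1) ^ 2)) = 1 := by
      push_cast
      field_simp
    rw [this, Complex.one_re]

end Averaging

section Extension

variable {Γ : Type} [Group Γ] {ζ : Γ → Γ → Circle}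

theorem exists_nontrivial (hζ : IsMultiplier ζ) {N : Subgroup Γ}
    (hex : ∃ (H : Type) (_ : NormedAddCommGroup H) (_ : InnerProductSpace ℂ H)
      (_ : CompleteSpace H) (σ : N → (H →L[ℂ] H)),
      IsZetaRepOn ζ N σ ∧ IsIrreducibleRep σ ∧ GammaPFaithful ζ N σ) :
    ∃ (H : Type) (_ : NormedAddCommGroup H) (_ : InnerProductSpace ℂ H)
      (_ : CompleteSpace H) (σ : N → (H →L[ℂ] H)),
      IsZetaRepOn ζ N σ ∧ IsIrreducibleRep σ ∧ GammaPFaithful ζ N σ ∧ Nontrivial H := by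
  obtain ⟨H, _, _, _, σ, hσ, hirr, hfaith⟩ := hex
  rcases subsingleton_or_nontrivial H with hH | hH
  · have h1 : ∀ x : N, x = 1 := fun x => hfaith x ⟨1, fun γ => by ext v; exact hH.elim _ _⟩
    refine ⟨ℂ, _, _, inferInstance, fun _ => 1, ⟨fun _ => one_mem _, rfl, fun x y => ?_⟩,
      fun K _ _ => eq_bot_or_eq_top K, fun x _ => h1 x, inferInstance⟩
    rw [h1 x, OneMemClass.coe_one, hζ.1]
    simp
  · exact ⟨H, _, _, _, σ, hσ, hirr, hfaith, hH⟩

/-- A vector state of an irreducible representation of a subgroup `N` extends to an extreme state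
of the whole group whose restriction to every infinite normal closure `M` of an element with
`M ∩ N = 1` is not a one-dimensional representation. -/
theorem exists_pure_extension [Countable Γ] (hFab : PropertyFab Γ) (hζ : IsMultiplier ζ)
    (hn : IsNormalised ζ) (N : Subgroup Γ) {H : Type*} [NormedAddCommGroup H]
    [InnerProductSpace ℂ H] [CompleteSpace H] {σ : N → (H →L[ℂ] H)}
    (hσ : IsZetaRep (fun x y : N => ζ x y) σ) (hirr : IsIrreducibleRep σ) {v : H}
    (hv : ‖v‖ = 1) :
    ∃ φ ∈ (zetaStates ζ).extremePoints ℝ, (∀ x : N, φ x = ⟪v, σ x v⟫_ℂ) ∧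
      ∀ x : Γ, Infinite (Subgroup.normalClosure {x}) →
        (∀ y ∈ Subgroup.normalClosure {x}, y ∈ N → y = 1) →
        ∀ χ ∈ zetaCharacters fun a b : Subgroup.normalClosure {x} => ζ a b,
          ¬ ∀ y : Subgroup.normalClosure {x}, φ y = χ y := by
  classical
  let F : Set (Γ → ℂ) := {φ | φ ∈ zetaStates ζ ∧ ∀ x : N, φ x = ⟪v, σ x v⟫_ℂ}
  have hF : IsCompact F := by
    refine (isCompact_zetaStates hζ hn).inter_right (t := {φ | ∀ x : N, φ x = ⟪v, σ x v⟫_ℂ}) ?_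
    rw [Set.ofPred_forall]
    exact isClosed_iInter fun x => isClosed_eq (by fun_prop) continuous_const
  have hext : IsExtreme ℝ (zetaStates ζ) F := by
    refine ⟨fun φ hφ => hφ.1, ?_⟩
    rintro φ hφ ψ hψ θ hθ ⟨a, b, ha, hb, -, rfl⟩
    refine ⟨hφ, hσ.eq_of_convex_combination (isMultiplier_restrict hζ N)
      (isNormalised_restrict hn N) hirr hv (restrict_mem_zetaStates hζ hn N hφ)
      (restrict_mem_zetaStates hζ hn N hψ) ha hb fun x => ?_⟩
    simpa using (hθ.2 x).symm
  let φ₀ : Γ → ℂ := fun x => if h : x ∈ N then ⟪v, σ ⟨x, h⟩ v⟫_ℂ else 0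
  have hφ₀ : φ₀ ∈ F := ⟨zeroExtend_mem_zetaStates hζ hn N hσ hv, fun x => by simp [φ₀]⟩
  let I := Σ x : {x : Γ // Infinite (Subgroup.normalClosure {x}) ∧
    ∀ y ∈ Subgroup.normalClosure {x}, y ∈ N → y = 1},
      zetaCharacters fun a b : Subgroup.normalClosure {x.1} => ζ a b
  have : Countable I := by
    have : ∀ x : Γ, Countable (zetaCharacters fun a b : Subgroup.normalClosure {x} => ζ a b) :=
      fun x => by
        have := hFab x
        exact (finite_zetaCharacters _).countable
    infer_instance
  obtain ⟨φ, hφ, hφI⟩ := exists_extremePoint_forall_notMem hF hφ₀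
    (fun i : I => {φ | ∀ y : Subgroup.normalClosure {i.1.1}, φ y = i.2.1 y}) fun i ε hε => by
      have := i.1.2.1
      obtain ⟨h, hpos, hlt, hle⟩ := exists_separating_functional hn _ i.2.2 hφ₀.1.1
        (fun x hx hx1 => dif_neg fun hxN => hx1 (i.1.2.2 x hx hxN)) hε
      exact ⟨h, fun ψ hψ => hpos ψ hψ.1, hlt, hle⟩
  exact ⟨φ, hext.extremePoints_subset_extremePoints hφ, hφ.1.2,
    fun x hx hxN χ hχ h => hφI ⟨⟨x, hx, hxN⟩, ⟨χ, hχ⟩⟩ h⟩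

end Extension

/-- If a countable group Γ with Property (Fab) is such that MS(Γ) has an irreducible
Γ-P-faithful ζ-representation, then Γ has an irreducible projectively faithful
ζ-representation. -/
theorem stmt_16 (Γ : Type) [Group Γ] [Countable Γ] (hFab : PropertyFab Γ)
    (ζ : Γ → Γ → Circle) (hζ : IsMultiplier ζ) (hnorm : IsNormalised ζ)
    (hex : ∃ (H : Type) (_ : NormedAddCommGroup H) (_ : InnerProductSpace ℂ H)
        (_ : CompleteSpace H) (σ : minisocle Γ → (H →L[ℂ] H)),
        IsZetaRepOn ζ (minisocle Γ) σ ∧ IsIrreducibleRep σ ∧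
          GammaPFaithful ζ (minisocle Γ) σ) :
    ∃ (H : Type) (_ : NormedAddCommGroup H) (_ : InnerProductSpace ℂ H) (_ : CompleteSpace H)
      (π : Γ → (H →L[ℂ] H)),
      IsZetaRep ζ π ∧ IsIrreducibleRep π ∧ PFaithful π := by
  obtain ⟨H, _, _, _, σ, hσ, hirr, hfaith, _⟩ := exists_nontrivial hζ hex
  obtain ⟨v, hv⟩ := exists_norm_eq H zero_le_one
  obtain ⟨φ, hext, hφN, hφM⟩ := exists_pure_extension hFab hζ hnorm (minisocle Γ) hσ hirr hv
  obtain ⟨K, _, _, _, π, w, hπ, hw, hφ, hd⟩ := exists_gns hζ hnorm hext.1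
  obtain rfl : (fun x => ⟪w, π x w⟫_ℂ) = φ := funext hφ
  refine ⟨K, _, _, _, π, hπ, hπ.irreducible_of_extreme hnorm hw hd hext, ?_⟩
  have hdσ := IsZetaRep.dense_span (ζ := fun x y : minisocle Γ => ζ x y) hσ hirr
    (norm_ne_zero_iff.1 (hv.trans_ne one_ne_zero))
  have hMS : ∀ y ∈ ProjKer π, y ∈ minisocle Γ → y = 1 := by
    rintro y ⟨z, hz⟩ hy
    refine congrArg Subtype.val (hfaith ⟨y, hy⟩ ⟨z, fun γ => ?_⟩)
    have hγ : γ * y * γ⁻¹ ∈ minisocle Γ := (normal_minisocle Γ).conj_mem y hy γ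
    have h := hπ.eq_smul_one_of_inner_eq hnorm hσ hdσ hφN (y := ⟨_, hγ⟩)
      (hπ.map_conj_eq_smul_one hnorm hz γ)
    rw [conjRep, dif_pos hγ, h, ← Circle.coe_mul, smul_smul, ← Circle.coe_mul,
      mul_inv_cancel_left]
  intro x hx
  by_contra hx1
  have hle := hπ.normalClosure_le_projKer hnorm hx
  have hdisj : ∀ y ∈ Subgroup.normalClosure {x}, y ∈ minisocle Γ → y = 1 := fun y hy =>
    hMS y (hle hy)
  have hinf := infinite_of_disjoint_minisocle Subgroup.normalClosure_normal
    (fun h => hx1 (by simpa [h] using Subgroup.subset_normalClosure (Set.mem_singleton x))) hdisj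
  choose χ hχ using fun y : Subgroup.normalClosure {x} => hle y.2
  have hw0 : w ≠ 0 := norm_ne_zero_iff.1 (hw.trans_ne one_ne_zero)
  refine hφM x hinf hdisj χ (fun a b => ?_) fun y => ?_
  · have h := congrArg (fun T : K →L[ℂ] K => T w) (hπ.2.2 a b)
    have hab := hχ (a * b)
    rw [Subgroup.coe_mul] at hab
    simp only [hχ, hab, smul_mul_assoc, one_mul, smul_smul, smul_apply, one_apply_eq_self] at h
    exact Circle.ext (by simpa using smul_left_injective ℂ hw0 h)
  · simp [hχ, inner_self_eq_norm_sq_to_K, hw]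
end
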